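/- Let x, y ∈ W, s ∈ S and let r be a reflection of W with s ≠ r, such that x ≺ sx, x ≺ rx, sx ≤ y and rx ≤ y in Bruhat order. If moreover srx ≰ y, then y ≺ sy, srx ≤ sy, and the Bruhat intervals [rx, y] and [srx, sy] are isomorphic as posets, the isomorphism being given by w ↦ sw. -/

import Mathlib

open Pointwise RealInnerProductSpace

noncomputable section

/-- The cone (set of all nonnegative linear combinations) over a set `X`
in a real vector space. -/
def coneOf {V : Type} [AddCommGroup V] [Module ℝ V] (X : Set V) : Set V :=
  {v | ∃ (n : ℕ) (c : Fin n → ℝ) (x : Fin n → V),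
    (∀ i, 0 ≤ c i) ∧ (∀ i, x i ∈ X) ∧ v = ∑ i, c i • x i}

/-- `v` spans an extremal ray of the cone `C`. -/
def IsExtremeDir {V : Type} [AddCommGroup V] [Module ℝ V] (C : Set V) (v : V) : Prop :=
  v ∈ C ∧ v ≠ 0 ∧ ∀ a ∈ C, ∀ b ∈ C, a + b = v → ∃ c : ℝ, 0 ≤ c ∧ a = c • v

/-- The inner normal cone of the polyhedron `P` at a point `p` : the set of (inner products
with) linear functionals attaining their minimum over `P` exactly at `p`, together with `0`. -/
def normalConeVertex {V : Type} [NormedAddCommGroup V] [InnerProductSpace ℝ V]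
    (P : Set V) (p : V) : Set V :=
  {u | ∀ q ∈ P, ⟪u, p⟫ ≤ ⟪u, q⟫ ∧ (⟪u, q⟫ = ⟪u, p⟫ → q = p)} ∪ {0}

/-- A finite Coxeter system `(W, S)` together with its geometric action on a Euclidean
vector space `V`, a root system `Φ = Φ⁺ ⊔ (-Φ⁺)` with simple roots `α s` (`s ∈ S`),
reflections `sβ β` for positive roots `β`, fundamental weights `ω s` (`s ∈ S`),
and the length function `len`. -/
structure CoxeterRootSystem (V : Type) [NormedAddCommGroup V] [InnerProductSpace ℝ V] where
  W : Type
  [grp : Group W]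
  [fin : Fintype W]
  [deceq : DecidableEq W]
  S : Set W
  ρ : W →* (V ≃ₗ[ℝ] V)
  Φpos : Set V
  α : W → V
  sβ : V → W
  ω : W → V
  len : W → ℕ
  hS_inv : ∀ s ∈ S, s * s = 1
  hS_ne : ∀ s ∈ S, s ≠ 1
  hS_gen : Subgroup.closure S = ⊤
  hρ_inj : ∀ u v : W, ρ u = ρ v → u = v
  hΦfin : Φpos.Finite
  hΦdisj : ∀ β ∈ Φpos, -β ∉ Φpos
  hΦperm : ∀ u : W, ∀ β ∈ Φpos, ρ u β ∈ Φpos ∨ -(ρ u β) ∈ Φpos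
  hα_mem : ∀ s ∈ S, α s ∈ Φpos
  hα_indep : LinearIndependent ℝ (fun s : S => α s.1)
  hα_span : Submodule.span ℝ (α '' S) = ⊤
  horbit : ∀ β ∈ Φpos, ∃ u s : W, s ∈ S ∧ β = ρ u (α s)
  hsβ_simple : ∀ s ∈ S, sβ (α s) = s
  hsβ_conj : ∀ u s : W, s ∈ S → ρ u (α s) ∈ Φpos → sβ (ρ u (α s)) = u * s * u⁻¹
  hsβ_reflect : ∀ β ∈ Φpos, ρ (sβ β) β = -β
  hsβ_fix : ∀ β ∈ Φpos, ∀ v : V, ⟪β, v⟫ = 0 → ρ (sβ β) v = v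
  hlen : ∀ u : W,
    len u = sInf {n | ∃ l : List W, (∀ x ∈ l, x ∈ S) ∧ l.length = n ∧ l.prod = u}
  hlen_geom : ∀ u : W, ∀ s ∈ S, (len (u * s) = len u + 1 ↔ ρ u (α s) ∈ Φpos)
  hω_dual : ∀ s ∈ S, ∀ t ∈ S, ⟪ω s, α t⟫ = if s = t then ⟪α t, α t⟫ / 2 else 0

attribute [instance] CoxeterRootSystem.grp CoxeterRootSystem.fin CoxeterRootSystem.deceq

namespace CoxeterRootSystem

variable {V : Type} [NormedAddCommGroup V] [InnerProductSpace ℝ V] (D : CoxeterRootSystem V)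

/-- The full root system `Φ = Φ⁺ ∪ (-Φ⁺)`. -/
def Φ : Set V := D.Φpos ∪ -D.Φpos

/-- The reflections of `W` : the conjugates of the simple reflections. -/
def IsRefl (r : D.W) : Prop := ∃ u : D.W, ∃ s ∈ D.S, r = u * s * u⁻¹

/-- The Bruhat cover relation `x ≺ r x` with `ℓ(r x) = ℓ(x) + 1`, `r` a reflection. -/
def Cov (x y : D.W) : Prop :=
  (∃ r : D.W, D.IsRefl r ∧ y = r * x) ∧ D.len y = D.len x + 1

/-- Bruhat order: the partial order generated by the cover relations. -/
def BruhatLE : D.W → D.W → Prop := Relation.ReflTransGen D.Cov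

/-- `E⁺(x,y)` : the labels of the atoms of the Bruhat interval `[x,y]`. -/
def Eplus (x y : D.W) : Set V :=
  {β | β ∈ D.Φpos ∧ D.Cov x (D.sβ β * x) ∧ D.BruhatLE (D.sβ β * x) y}

/-- The upper Bruhat cone `C⁺(x,y)`. -/
def Cplus (x y : D.W) : Set V := coneOf (D.Eplus x y)

/-- `E⁻(x,y)` : the labels of the coatoms of the Bruhat interval `[x,y]`. -/
def Eminus (x y : D.W) : Set V :=
  {β | β ∈ D.Φpos ∧ D.Cov (D.sβ β * y) y ∧ D.BruhatLE x (D.sβ β * y)}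

/-- The lower Bruhat cone `C⁻(x,y)`. -/
def Cminus (x y : D.W) : Set V := coneOf (D.Eminus x y)

/-- The inversion set `Inv(u) = Φ⁺ ∩ u (Φ⁻)`. -/
def invSet (u : D.W) : Set V := {β | β ∈ D.Φpos ∧ -(D.ρ u⁻¹ β) ∈ D.Φpos}

/-- The Demazure product of a word. -/
def demazure (Q : List D.W) : D.W :=
  Q.foldl (fun v s => if D.len (v * s) = D.len v + 1 then v * s else v) 1

/-- The subword of `Q` on the positions in the complement of `P`. -/
def cword (Q : List D.W) (P : Finset (Fin Q.length)) : List D.W :=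
  ((List.finRange Q.length).filter (fun k => decide (k ∉ P))).map Q.get

/-- `I` is a facet of the subword complex `SC(Q,w)` : the complement of `I` in `Q` is a
reduced word for `w`. -/
def IsFacet (Q : List D.W) (w : D.W) (I : Finset (Fin Q.length)) : Prop :=
  (D.cword Q I).prod = w ∧ (D.cword Q I).length = D.len w

/-- The root function `r(I,k)`. -/
def rootf (Q : List D.W) (I : Finset (Fin Q.length)) (k : Fin Q.length) : V :=
  D.ρ (((List.finRange Q.length).filter (fun j => decide (j < k ∧ j ∉ I))).map Q.get).prod
    (D.α (Q.get k))

/-- The root configuration `R(I)` (as a set). -/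
def rootConf (Q : List D.W) (I : Finset (Fin Q.length)) : Set V :=
  {v | ∃ i ∈ I, D.rootf Q I i = v}

/-- The weight function `ω(I,k)`. -/
def weightf (Q : List D.W) (I : Finset (Fin Q.length)) (k : Fin Q.length) : V :=
  D.ρ (((List.finRange Q.length).filter (fun j => decide (j < k ∧ j ∉ I))).map Q.get).prod
    (D.ω (Q.get k))

/-- The brick vector `B(I) = -∑ₖ ω(I,k)`. -/
def brickVec (Q : List D.W) (I : Finset (Fin Q.length)) : V :=
  -∑ k : Fin Q.length, D.weightf Q I k

/-- The brick polyhedron : the Minkowski sum of the convex hull of the brick vectors of the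
facets of `SC(Q,w)` and the Bruhat cone `C⁺(w, δ(Q))`. -/
def brickPoly (Q : List D.W) (w : D.W) : Set V :=
  convexHull ℝ {v | ∃ I : Finset (Fin Q.length), D.IsFacet Q w I ∧ v = D.brickVec Q I} +
    D.Cplus w (D.demazure Q)

/-- The position `i` of the facet `I` is flippable. -/
def Flippable (Q : List D.W) (w : D.W) (I : Finset (Fin Q.length)) (i : Fin Q.length) : Prop :=
  ∃ J : Finset (Fin Q.length), D.IsFacet Q w J ∧ J ≠ I ∧ ∃ j ∈ J, I.erase i = J.erase j

/-- The facets `I` and `J` are related by an `f`-preserving flip. -/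
def FPresFlip (f : V →ₗ[ℝ] ℝ) (Q : List D.W) (w : D.W) (I J : Finset (Fin Q.length)) : Prop :=
  D.IsFacet Q w I ∧ D.IsFacet Q w J ∧ I ≠ J ∧
    ∃ i ∈ I, ∃ j ∈ J, I.erase i = J.erase j ∧ f (D.rootf Q I i) = 0

end CoxeterRootSystem

/-!
Suppose that `z ≺ sz`. If `z ≺ w` and `w ≠ sz`, the strong exchange property gives `sz ≺ sw` and
`w ≺ sw`. Carrying this along a chain from `z` to `y` shows that `sz ≤ y`, or `y ≺ sy` and
`sz ≤ sy`. If `sa ≰ y`, the first alternative is excluded for every `z` in `[a, y]`, so `w ↦ sw`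
raises the whole interval; applying it again lowers `[sa, sy]` back.

The axioms give the sign of `ρ u (α s)` for each `s` separately, and proportional roots of different
lengths might a priori have different signs. So strong exchange is not immediate: it amounts to
the roots `ρ g (α s)` being split into two halves such that a simple reflection `t` moves
only the multiples of `α t` from one half to the other. The signs do this if the sign of `ρ w (α s)`
agrees with the comparison of lengths made from the left, and the inner products of normalized
roots in a component of the Coxeter graph tell when they do. In rank two one computes with reduced
words. If no golden inner product occurs, pairs of roots with a given inner product are transitively
permuted up to sign, so one pair suffices. Otherwise all inner products lie in `ℤ[φ]`, and a finite
computation shows that the component is `H₃` or `H₄`, where the positive roots can be listed.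
-/

namespace CoxeterRootSystem

variable {V : Type} [NormedAddCommGroup V] [InnerProductSpace ℝ V] (D : CoxeterRootSystem V)

/-! ### Words, length and the exchange property -/

section Words

/-- `l` is a word in the simple reflections. -/
def IsWord (l : List D.W) : Prop := ∀ x ∈ l, x ∈ D.S

variable {D}

theorem isWord_cons {a : D.W} {l : List D.W} : D.IsWord (a :: l) ↔ a ∈ D.S ∧ D.IsWord l :=
  List.forall_mem_cons

theorem IsWord.sublist {l m : List D.W} (hm : D.IsWord m) (h : l.Sublist m) : D.IsWord l :=
  fun x hx => hm x (h.subset hx)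

theorem IsWord.reverse {l : List D.W} (hl : D.IsWord l) : D.IsWord l.reverse :=
  fun x hx => hl x (List.mem_reverse.1 hx)

theorem inv_simple {s : D.W} (hs : s ∈ D.S) : s⁻¹ = s :=
  inv_eq_of_mul_eq_one_left (D.hS_inv s hs)

theorem simple_mul_simple_mul {s : D.W} (hs : s ∈ D.S) (w : D.W) : s * (s * w) = w := by
  rw [← mul_assoc, D.hS_inv s hs, one_mul]

theorem IsWord.inv_prod {l : List D.W} (hl : D.IsWord l) : l.prod⁻¹ = l.reverse.prod := by
  rw [List.prod_inv_reverse, List.map_congr_left fun x hx => inv_simple (hl x hx), List.map_id']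

theorem IsWord.len_prod_le {l : List D.W} (hl : D.IsWord l) : D.len l.prod ≤ l.length := by
  rw [D.hlen]
  exact Nat.sInf_le ⟨l, hl, rfl, rfl⟩

variable (D)

theorem exists_word (u : D.W) : ∃ l, D.IsWord l ∧ l.prod = u := by
  have hu : u ∈ Submonoid.closure D.S := by
    rw [← Subgroup.closure_toSubmonoid_of_finite, D.hS_gen]
    trivial
  exact Submonoid.exists_list_of_mem_closure hu

theorem exists_reduced_word (u : D.W) : ∃ l, D.IsWord l ∧ l.length = D.len u ∧ l.prod = u := by
  obtain ⟨l, hl, hprod⟩ := D.exists_word u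
  rw [D.hlen]
  exact Nat.sInf_mem (s := {n | ∃ l : List D.W, D.IsWord l ∧ l.length = n ∧ l.prod = u})
    ⟨_, l, hl, rfl, hprod⟩

theorem len_one : D.len 1 = 0 :=
  Nat.le_zero.1 (IsWord.len_prod_le (D := D) (l := []) (List.forall_mem_nil _))

theorem len_inv (u : D.W) : D.len u⁻¹ = D.len u := by
  have len_inv_le (u : D.W) : D.len u⁻¹ ≤ D.len u := by
    obtain ⟨l, hl, hlen, rfl⟩ := D.exists_reduced_word u
    rw [hl.inv_prod, ← hlen, ← List.length_reverse]
    exact hl.reverse.len_prod_le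
  exact (len_inv_le u).antisymm (by simpa only [inv_inv] using len_inv_le u⁻¹)

end Words

section Exchange

/-- A two-colouring `e` of `W` by the two sides of the wall between `1` and `s`, moved around by
right multiplication: `g` and `g * s` lie on different sides, and passing from `g` to `t * g` with
`t` simple changes the side only if `t * g = g * s`. -/
def HasSeparator (s : D.W) : Prop :=
  ∃ e : D.W → Bool, (∀ g, e (g * s) = !e g) ∧
    ∀ t ∈ D.S, ∀ g, e (t * g) ≠ e g → t * g = g * s

variable {D}

theorem exists_eraseIdx_of_separated {s : D.W} {e : D.W → Bool}
    (he : ∀ t ∈ D.S, ∀ g, e (t * g) ≠ e g → t * g = g * s) {l : List D.W} (hl : D.IsWord l)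
    {g : D.W} (hg : e (l.prod⁻¹ * g) ≠ e g) :
    ∃ i < l.length, g * s * g⁻¹ * l.prod = (l.eraseIdx i).prod := by
  induction l generalizing g with
  | nil => simp at hg
  | cons a l ih =>
    obtain ⟨ha, hl⟩ := isWord_cons.1 hl
    by_cases hag : e (a * g) = e g
    · have hsep : e (l.prod⁻¹ * (a * g)) ≠ e (a * g) := by
        rwa [hag, ← mul_assoc, show l.prod⁻¹ * a = (a :: l).prod⁻¹ by
          rw [List.prod_cons, mul_inv_rev, inv_simple ha]]
      obtain ⟨i, hi, hprod⟩ := ih hl hsep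
      refine ⟨i + 1, by simpa using hi, ?_⟩
      rw [List.eraseIdx_cons_succ, List.prod_cons, List.prod_cons, ← hprod, mul_inv_rev,
        inv_simple ha]
      simp only [mul_assoc, simple_mul_simple_mul ha]
    · refine ⟨0, by simp, ?_⟩
      simp [← he a ha g hag, mul_assoc, simple_mul_simple_mul ha]

theorem IsRefl.mul_self {r : D.W} (hr : D.IsRefl r) : r * r = 1 := by
  obtain ⟨u, s, hs, rfl⟩ := hr
  rw [conj_mul, D.hS_inv s hs, mul_one, mul_inv_cancel]

theorem IsRefl.inv_eq {r : D.W} (hr : D.IsRefl r) : r⁻¹ = r :=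
  inv_eq_of_mul_eq_one_left hr.mul_self

theorem len_lt_of_prod_eraseIdx {l : List D.W} (hl : D.IsWord l) {i : ℕ} (hi : i < l.length)
    {w : D.W} (hw : w = (l.eraseIdx i).prod) : D.len w < l.length := by
  have hle := (hl.sublist (l.eraseIdx_sublist i)).len_prod_le
  rw [← hw, List.length_eraseIdx_of_lt hi] at hle
  omega

theorem exchange_of_hasSeparator (hsep : ∀ s ∈ D.S, D.HasSeparator s) {r : D.W} (hr : D.IsRefl r)
    {l : List D.W} (hl : D.IsWord l) (hlen : D.len (r * l.prod) ≤ D.len l.prod) :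
    ∃ i < l.length, r * l.prod = (l.eraseIdx i).prod := by
  have hrr := hr.mul_self
  have hrinv := hr.inv_eq
  obtain ⟨u, s, hs, hrus⟩ := hr
  obtain ⟨e, hflip, he⟩ := hsep s hs
  by_cases hside : e (l.prod⁻¹ * u) = e u
  -- otherwise a reduced word of `r * l.prod` would cross the wall of `r` and could be shortened
  · exfalso
    obtain ⟨m, hm, hmlen, hmprod⟩ := D.exists_reduced_word (r * l.prod)
    have hmside : e (m.prod⁻¹ * u) ≠ e u := by
      have : m.prod⁻¹ * u = l.prod⁻¹ * u * s := by
        rw [hmprod, mul_inv_rev, hrinv, hrus]; group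
      simp [this, hflip, hside]
    obtain ⟨i, hi, hprod⟩ := exists_eraseIdx_of_separated he hm hmside
    rw [← hrus, hmprod, ← mul_assoc, hrr, one_mul] at hprod
    have := len_lt_of_prod_eraseIdx hm hi hprod
    omega
  · exact hrus ▸ exists_eraseIdx_of_separated he hl hside

end Exchange

end CoxeterRootSystem

/-! ### Normalized simple roots and reduced words -/

namespace CoxeterRootSystem

variable {V : Type} [NormedAddCommGroup V] [InnerProductSpace ℝ V] (D : CoxeterRootSystem V)

section SimpleRoots

/-- The factor by which `α s` exceeds the normalized simple root `simpleRoot s`. -/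
def rootScale (s : D.W) : ℝ := ‖D.α s‖ / √2

/-- The simple root `α s` rescaled to squared norm `2`, so that `s` acts by
`v ↦ v - ⟪simpleRoot s, v⟫ • simpleRoot s`. -/
def simpleRoot (s : D.W) : V := (√2 / ‖D.α s‖) • D.α s

variable {D}

theorem α_ne_zero {s : D.W} (hs : s ∈ D.S) : D.α s ≠ 0 := fun h =>
  D.hΦdisj _ (D.hα_mem s hs) (by simpa only [h, neg_zero] using h ▸ D.hα_mem s hs)

theorem rootScale_pos {s : D.W} (hs : s ∈ D.S) : 0 < D.rootScale s :=
  div_pos (norm_pos_iff.2 (α_ne_zero hs)) (by positivity)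

theorem rootScale_smul_simpleRoot {s : D.W} (hs : s ∈ D.S) :
    D.rootScale s • D.simpleRoot s = D.α s := by
  have := norm_pos_iff.2 (α_ne_zero hs)
  rw [rootScale, simpleRoot, smul_smul, div_mul_div_cancel₀' this.ne', div_self (by positivity),
    one_smul]

theorem inner_simpleRoot_self {s : D.W} (hs : s ∈ D.S) :
    ⟪D.simpleRoot s, D.simpleRoot s⟫ = 2 := by
  have := norm_pos_iff.2 (α_ne_zero hs)
  rw [real_inner_self_eq_norm_sq, simpleRoot, norm_smul, norm_div, norm_norm,
    div_mul_cancel₀ _ this.ne', Real.norm_of_nonneg (by positivity), Real.sq_sqrt (by norm_num)]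

theorem ρ_mul (u w : D.W) (v : V) : D.ρ (u * w) v = D.ρ u (D.ρ w v) := by
  rw [map_mul, LinearEquiv.mul_apply]

theorem ρ_one (v : V) : D.ρ 1 v = v := by rw [map_one, LinearEquiv.coe_one, id]

theorem ρ_inv_ρ (u : D.W) (v : V) : D.ρ u⁻¹ (D.ρ u v) = v := by
  rw [← ρ_mul, inv_mul_cancel, ρ_one]

theorem ρ_ρ_inv (u : D.W) (v : V) : D.ρ u (D.ρ u⁻¹ v) = v := by
  rw [← ρ_mul, mul_inv_cancel, ρ_one]

theorem ρ_simpleRoot_self {s : D.W} (hs : s ∈ D.S) :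
    D.ρ s (D.simpleRoot s) = -D.simpleRoot s := by
  have hα := D.hsβ_reflect (D.α s) (D.hα_mem s hs)
  rw [D.hsβ_simple s hs] at hα
  rw [simpleRoot, map_smul, hα, smul_neg]

theorem ρ_eq_self_of_inner_eq_zero {s : D.W} (hs : s ∈ D.S) {v : V}
    (hv : ⟪D.simpleRoot s, v⟫ = 0) : D.ρ s v = v := by
  have hα : ⟪D.α s, v⟫ = 0 := by
    rw [← rootScale_smul_simpleRoot hs, inner_smul_left, hv, mul_zero]
  simpa only [D.hsβ_simple s hs] using D.hsβ_fix (D.α s) (D.hα_mem s hs) v hα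

theorem ρ_simple {s : D.W} (hs : s ∈ D.S) (v : V) :
    D.ρ s v = v - ⟪D.simpleRoot s, v⟫ • D.simpleRoot s := by
  set a := D.simpleRoot s
  have hfix : D.ρ s (v - (⟪a, v⟫ / 2) • a) = v - (⟪a, v⟫ / 2) • a := by
    apply ρ_eq_self_of_inner_eq_zero hs
    rw [inner_sub_right, inner_smul_right, inner_simpleRoot_self hs, div_mul_cancel₀ _ two_ne_zero,
      sub_self]
  rw [map_sub, map_smul, ρ_simpleRoot_self hs, sub_eq_iff_eq_add] at hfix
  rw [hfix]
  module

theorem word_induction {p : D.W → Prop} (one : p 1)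
    (simple_mul : ∀ s ∈ D.S, ∀ w, p w → p (s * w)) (w : D.W) : p w := by
  obtain ⟨l, hl, rfl⟩ := D.exists_word w
  induction l with
  | nil => exact one
  | cons a l ih =>
    rw [List.prod_cons]
    exact simple_mul a (isWord_cons.1 hl).1 _ (ih (isWord_cons.1 hl).2)

theorem inner_ρ_ρ (u : D.W) (v w : V) : ⟪D.ρ u v, D.ρ u w⟫ = ⟪v, w⟫ := by
  induction u using word_induction with
  | one => rw [ρ_one, ρ_one]
  | simple_mul s hs u ih =>
    rw [ρ_mul, ρ_mul, ρ_simple hs, ρ_simple hs, inner_sub_left, inner_sub_right,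
      inner_sub_right, real_inner_smul_left, inner_smul_right, inner_smul_right,
      real_inner_smul_left, inner_simpleRoot_self hs, ih, real_inner_comm (D.simpleRoot s)]
    ring

theorem inner_ρ_left (u : D.W) (v w : V) : ⟪D.ρ u v, w⟫ = ⟪v, D.ρ u⁻¹ w⟫ := by
  rw [← inner_ρ_ρ u⁻¹, ρ_inv_ρ]

theorem inner_ρ_simpleRoot_self {s : D.W} (hs : s ∈ D.S) (w : D.W) :
    ⟪D.ρ w (D.simpleRoot s), D.ρ w (D.simpleRoot s)⟫ = 2 := by
  rw [inner_ρ_ρ, inner_simpleRoot_self hs]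

theorem ρ_conj_simple {s : D.W} (hs : s ∈ D.S) (w : D.W) (v : V) :
    D.ρ (w * s * w⁻¹) v = v - ⟪D.ρ w (D.simpleRoot s), v⟫ • D.ρ w (D.simpleRoot s) := by
  rw [ρ_mul, ρ_mul, ρ_simple hs, map_sub, map_smul, ρ_ρ_inv, inner_ρ_left]

theorem mul_eq_mul_of_ρ_simpleRoot {t s : D.W} (ht : t ∈ D.S) (hs : s ∈ D.S) {w : D.W}
    (h : D.ρ w (D.simpleRoot s) = D.simpleRoot t ∨ D.ρ w (D.simpleRoot s) = -D.simpleRoot t) :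
    t * w = w * s := by
  have hconj : w * s * w⁻¹ = t := by
    refine D.hρ_inj _ _ (LinearEquiv.ext fun v => ?_)
    rw [ρ_conj_simple hs, ρ_simple ht]
    rcases h with h | h <;> rw [h]
    rw [inner_neg_left, neg_smul_neg]
  rw [← hconj, inv_mul_cancel_right]

end SimpleRoots

section Sign

/-- The root `v`, in the `W`-orbit of `simpleRoot s`, is positive. Since `Φpos` contains the orbit
of `α s` up to sign, `v` has to be rescaled. -/
def IsPos (s : D.W) (v : V) : Prop := D.rootScale s • v ∈ D.Φpos

/-- The roots `w a_s` and `t w a_s` have the same sign, where `a_s` is the simple root of `s`. -/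
def SameSign (t w s : D.W) : Prop :=
  D.IsPos s (D.ρ (t * w) (D.simpleRoot s)) ↔ D.IsPos s (D.ρ w (D.simpleRoot s))

variable {D} {s t : D.W}

theorem isPos_iff (hs : s ∈ D.S) (u : D.W) :
    D.IsPos s (D.ρ u (D.simpleRoot s)) ↔ D.len (u * s) = D.len u + 1 := by
  rw [D.hlen_geom u s hs, IsPos, ← map_smul, rootScale_smul_simpleRoot hs]

theorem isPos_neg (hs : s ∈ D.S) (u : D.W) :
    D.IsPos s (-D.ρ u (D.simpleRoot s)) ↔ ¬ D.IsPos s (D.ρ u (D.simpleRoot s)) := by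
  rw [IsPos, IsPos, smul_neg, ← map_smul, rootScale_smul_simpleRoot hs]
  exact ⟨fun h h' => D.hΦdisj _ h' h, (D.hΦperm u _ (D.hα_mem s hs)).resolve_left⟩

theorem len_mul_simple (hs : s ∈ D.S) (u : D.W) :
    D.len (u * s) = D.len u + 1 ∨ D.len u = D.len (u * s) + 1 := by
  have h := isPos_iff hs (u * s)
  rw [mul_assoc, D.hS_inv s hs, mul_one, ρ_mul, ρ_simpleRoot_self hs, map_neg, isPos_neg hs,
    isPos_iff hs u] at h
  tauto

theorem len_simple_mul (hs : s ∈ D.S) (u : D.W) :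
    D.len (s * u) = D.len u + 1 ∨ D.len u = D.len (s * u) + 1 := by
  simpa only [← D.len_inv (u⁻¹ * s), mul_inv_rev, inv_simple hs, inv_inv, D.len_inv u]
    using len_mul_simple hs u⁻¹

theorem IsWord.len_prod_mod_two {l : List D.W} (hl : D.IsWord l) :
    D.len l.prod % 2 = l.length % 2 := by
  induction l with
  | nil => rw [List.prod_nil, D.len_one, List.length_nil]
  | cons a l ih =>
    obtain ⟨ha, hl⟩ := isWord_cons.1 hl
    have := ih hl
    have := len_simple_mul ha l.prod
    rw [List.prod_cons, List.length_cons]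
    omega

theorem sameSign_iff (hs : s ∈ D.S) (w : D.W) :
    D.SameSign t w s ↔
      (D.len (t * w * s) = D.len (t * w) + 1 ↔ D.len (w * s) = D.len w + 1) := by
  rw [SameSign, isPos_iff hs, isPos_iff hs]

theorem sameSign_symm (ht : t ∈ D.S) (hs : s ∈ D.S) (w : D.W) :
    D.SameSign t w s ↔ D.SameSign s w⁻¹ t := by
  have hstw : D.len (s * w⁻¹ * t) = D.len (t * w * s) := by
    rw [← D.len_inv, mul_inv_rev, mul_inv_rev, inv_inv, inv_simple hs, inv_simple ht, mul_assoc]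
  have hsw : D.len (s * w⁻¹) = D.len (w * s) := by
    rw [← D.len_inv, mul_inv_rev, inv_inv, inv_simple hs]
  have htw : D.len (w⁻¹ * t) = D.len (t * w) := by
    rw [← D.len_inv, mul_inv_rev, inv_inv, inv_simple ht]
  rw [sameSign_iff hs, sameSign_iff ht, hstw, hsw, htw, D.len_inv]
  have := len_mul_simple hs (t * w)
  have := len_mul_simple hs w
  have := len_simple_mul ht w
  have := mul_assoc t w s ▸ len_simple_mul ht (w * s)
  omega

theorem sameSign_congr (hs : s ∈ D.S) {w w' : D.W}
    (h : D.ρ w (D.simpleRoot s) = D.ρ w' (D.simpleRoot s) ∨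
      D.ρ w (D.simpleRoot s) = -D.ρ w' (D.simpleRoot s)) :
    D.SameSign t w s ↔ D.SameSign t w' s := by
  rw [SameSign, SameSign, ρ_mul, ρ_mul]
  rcases h with h | h <;> rw [h]
  rw [map_neg, ← ρ_mul, isPos_neg hs, isPos_neg hs, not_iff_not]

theorem sameSign_congr_of_ρ (ht : t ∈ D.S) (hs : s ∈ D.S) {g w w' : D.W}
    (hg : D.ρ g (D.simpleRoot t) = D.simpleRoot t ∨ D.ρ g (D.simpleRoot t) = -D.simpleRoot t)
    (h : D.ρ g (D.ρ w (D.simpleRoot s)) = D.ρ w' (D.simpleRoot s) ∨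
      D.ρ g (D.ρ w (D.simpleRoot s)) = -D.ρ w' (D.simpleRoot s)) :
    D.SameSign t w s ↔ D.SameSign t w' s := by
  rw [← ρ_mul] at h
  rw [← sameSign_congr hs h, sameSign_symm ht hs w, sameSign_symm ht hs (g * w)]
  apply sameSign_congr ht
  have hginv : D.ρ (g * w)⁻¹ (D.ρ g (D.simpleRoot t)) = D.ρ w⁻¹ (D.simpleRoot t) := by
    rw [← ρ_mul, mul_inv_rev, inv_mul_cancel_right]
  rw [← hginv]
  rcases hg with hg | hg <;> simp [hg]

theorem sameSign_of_inner_eq_zero (ht : t ∈ D.S) {w : D.W}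
    (h : ⟪D.simpleRoot t, D.ρ w (D.simpleRoot s)⟫ = 0) : D.SameSign t w s := by
  rw [SameSign, ρ_mul, ρ_eq_self_of_inner_eq_zero ht h]

theorem hasSeparator_of_sameSign (hs : s ∈ D.S)
    (h : ∀ t ∈ D.S, ∀ w, D.SameSign t w s ∨ t * w = w * s) : D.HasSeparator s := by
  classical
  refine ⟨fun g => decide (D.IsPos s (D.ρ g (D.simpleRoot s))), fun g => ?_, fun t ht g hne => ?_⟩
  · beta_reduce
    rw [ρ_mul, ρ_simpleRoot_self hs, map_neg, ← decide_not, decide_eq_decide, isPos_neg hs g]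
  · exact (h t ht g).resolve_left fun hsame => hne (decide_eq_decide.2 hsame)

end Sign

section Reduced

/-- `l` is a reduced word. -/
def IsReduced (l : List D.W) : Prop := D.IsWord l ∧ D.len l.prod = l.length

variable {D} {s t : D.W}

theorem IsWord.left {l m : List D.W} (h : D.IsWord (l ++ m)) : D.IsWord l :=
  h.sublist (List.sublist_append_left l m)

theorem IsWord.right {l m : List D.W} (h : D.IsWord (l ++ m)) : D.IsWord m :=
  h.sublist (List.sublist_append_right l m)

theorem IsReduced.sameSign {l : List D.W} (h : D.IsReduced (t :: l ++ [s])) :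
    D.SameSign t l.prod s := by
  obtain ⟨hword, hlen⟩ := h
  have ht : t ∈ D.S := hword t (by simp)
  have hs : s ∈ D.S := hword s (by simp)
  rw [List.prod_append, List.prod_cons, List.prod_singleton] at hlen
  simp only [List.cons_append, List.length_cons, List.length_append, List.length_nil] at hlen
  rw [sameSign_iff hs]
  have := (isWord_cons.1 hword.left).2.len_prod_le
  have := len_mul_simple hs (t * l.prod)
  have := len_mul_simple hs l.prod
  have := len_simple_mul ht l.prod
  have := mul_assoc t l.prod s ▸ len_simple_mul ht (l.prod * s)
  omega

theorem IsReduced.isPos {l : List D.W} (h : D.IsReduced (l ++ [s])) :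
    D.IsPos s (D.ρ l.prod (D.simpleRoot s)) := by
  obtain ⟨hword, hlen⟩ := h
  have hs : s ∈ D.S := hword s (by simp)
  rw [isPos_iff hs]
  rw [List.prod_append, List.prod_singleton, List.length_append, List.length_singleton] at hlen
  have := hword.left.len_prod_le
  have := len_mul_simple hs l.prod
  omega

variable (D)

/-- The coefficient of `simpleRoot s`, for `s ∈ S`, in the basis of normalized simple roots; up to
scaling it is the pairing with the fundamental weight `ω s`. -/
def coord (s : D.W) : V →ₗ[ℝ] ℝ := ⟪D.ω s, D.simpleRoot s⟫⁻¹ • innerₛₗ ℝ (D.ω s)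

/-- Every word for `w` contains `s`, because `w` changes some `s`-coordinate. -/
def InSupport (w s : D.W) : Prop := ∃ v, D.coord s (D.ρ w v) ≠ D.coord s v

variable {D}

theorem inner_ω_simpleRoot_ne_zero (hs : s ∈ D.S) : ⟪D.ω s, D.simpleRoot s⟫ ≠ 0 := by
  intro h
  have hα := D.hω_dual s hs s hs
  rw [if_pos rfl, ← rootScale_smul_simpleRoot hs, inner_smul_right, h, mul_zero, eq_comm,
    div_eq_zero_iff, rootScale_smul_simpleRoot hs, inner_self_eq_zero] at hα
  exact hα.elim (α_ne_zero hs) two_ne_zero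

theorem coord_simpleRoot_self (hs : s ∈ D.S) : D.coord s (D.simpleRoot s) = 1 :=
  inv_mul_cancel₀ (inner_ω_simpleRoot_ne_zero hs)

theorem coord_simpleRoot_of_ne (hs : s ∈ D.S) (ht : t ∈ D.S) (h : s ≠ t) :
    D.coord s (D.simpleRoot t) = 0 := by
  have hα := D.hω_dual s hs t ht
  rw [if_neg h, ← rootScale_smul_simpleRoot ht, inner_smul_right] at hα
  have := (mul_eq_zero.1 hα).resolve_left (rootScale_pos ht).ne'
  simp [coord, this]

theorem coord_ρ_of_notMem (hs : s ∈ D.S) {l : List D.W} (hl : D.IsWord l) (h : s ∉ l) (v : V) :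
    D.coord s (D.ρ l.prod v) = D.coord s v := by
  induction l with
  | nil => rw [List.prod_nil, ρ_one]
  | cons a l ih =>
    obtain ⟨ha, hl⟩ := isWord_cons.1 hl
    obtain ⟨hsa, hsl⟩ := List.ne_and_not_mem_of_not_mem_cons h
    rw [List.prod_cons, ρ_mul, ρ_simple ha, map_sub, map_smul, coord_simpleRoot_of_ne hs ha hsa,
      smul_zero, sub_zero, ih hl hsl]

theorem coord_ρ_inv_of_notMem (hs : s ∈ D.S) {l : List D.W} (hl : D.IsWord l) (h : s ∉ l)
    (v : V) : D.coord s (D.ρ l.prod⁻¹ v) = D.coord s v := by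
  rw [← coord_ρ_of_notMem hs hl h, ρ_ρ_inv]

theorem InSupport.mem (hs : s ∈ D.S) {l : List D.W} (hl : D.IsWord l)
    (h : D.InSupport l.prod s) : s ∈ l := by
  by_contra hsl
  obtain ⟨v, hv⟩ := h
  exact hv (coord_ρ_of_notMem hs hl hsl v)

theorem inSupport_of_count_eq_one (hs : s ∈ D.S) {l : List D.W} (hl : D.IsWord l)
    (h : l.count s = 1) : D.InSupport l.prod s := by
  obtain ⟨l₁, l₂, rfl⟩ := List.append_of_mem (List.count_pos_iff.1 (h ▸ Nat.one_pos))
  rw [List.count_append, List.count_cons_self] at h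
  have h₁ : s ∉ l₁ := List.count_eq_zero.1 (by omega)
  have h₂ : s ∉ l₂ := List.count_eq_zero.1 (by omega)
  refine ⟨D.ρ l₂.prod⁻¹ (D.simpleRoot s), ?_⟩
  rw [List.prod_append, List.prod_cons, ρ_mul, ρ_mul, ρ_ρ_inv, ρ_simpleRoot_self hs,
    coord_ρ_of_notMem hs hl.left h₁, coord_ρ_inv_of_notMem hs (isWord_cons.1 hl.right).2 h₂,
    map_neg, coord_simpleRoot_self hs]
  norm_num

theorem isReduced_of_nodup {l : List D.W} (hl : D.IsWord l) (hnodup : l.Nodup) :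
    D.IsReduced l := by
  obtain ⟨m, hm, hmlen, hmprod⟩ := D.exists_reduced_word l.prod
  refine ⟨hl, hl.len_prod_le.antisymm (hmlen ▸ (hnodup.subperm fun x hx => ?_).length_le)⟩
  exact InSupport.mem (hl x hx) hm
    (hmprod ▸ inSupport_of_count_eq_one (hl x hx) hl (List.count_eq_one_of_mem hnodup hx))

theorem eq_of_inner_eq_two {v w : V} (hv : ⟪v, v⟫ = 2) (hw : ⟪w, w⟫ = 2) (h : ⟪v, w⟫ = 2) :
    v = w := by
  rw [← sub_eq_zero, ← inner_self_eq_zero (𝕜 := ℝ), inner_sub_left, inner_sub_right,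
    inner_sub_right, real_inner_comm v w, hv, hw, h]
  norm_num

theorem exists_eq_append_of_count_eq_two {β : Type*} [DecidableEq β] {a : β} {l : List β}
    (h : l.count a = 2) :
    ∃ l₁ l₂ l₃, l = l₁ ++ a :: (l₂ ++ a :: l₃) ∧ a ∉ l₁ ∧ a ∉ l₂ ∧ a ∉ l₃ := by
  obtain ⟨l₁, m, rfl, h₁⟩ := List.eq_append_cons_of_mem (List.count_pos_iff.1 (h ▸ Nat.two_pos))
  have hm : m.count a = 1 := by simpa [List.count_eq_zero.2 h₁] using h
  obtain ⟨l₂, l₃, rfl, h₂⟩ := List.eq_append_cons_of_mem (List.count_pos_iff.1 (hm ▸ Nat.one_pos))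
  have h₃ : l₃.count a = 0 := by simpa [List.count_eq_zero.2 h₂] using hm
  exact ⟨l₁, l₂, l₃, rfl, h₁, h₂, List.count_eq_zero.1 h₃⟩

theorem replicate_append_subperm {β : Type*} [DecidableEq β] {a : β} {l m : List β} {k : ℕ}
    (hl : l.Nodup) (ha : a ∉ l) (hlm : l ⊆ m) (hk : k ≤ m.count a) :
    (List.replicate k a ++ l).Subperm m := by
  rw [List.subperm_ext_iff]
  intro b hb
  rw [List.count_append, List.count_replicate]
  rcases eq_or_ne a b with rfl | hab
  · simpa [List.count_eq_zero.2 ha] using hk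
  · have hbl : b ∈ l := by simpa [hab.symm] using hb
    simpa [hab, List.count_eq_one_of_mem hl hbl] using hlm hbl

theorem ρ_simpleRoot_of_not_inSupport (hs : s ∈ D.S) {l₁ l₂ l₃ : List D.W}
    (hl : D.IsWord (l₁ ++ s :: (l₂ ++ s :: l₃))) (h₁ : s ∉ l₁) (h₂ : s ∉ l₂) (h₃ : s ∉ l₃)
    (h : ¬ D.InSupport (l₁ ++ s :: (l₂ ++ s :: l₃)).prod s) :
    D.ρ l₂.prod (D.simpleRoot s) = D.simpleRoot s := by
  have hword := (isWord_cons.1 hl.right).2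
  have hcoord := not_not.1 (not_exists.1 h (D.ρ l₃.prod⁻¹ (D.simpleRoot s)))
  rw [coord_ρ_inv_of_notMem hs (isWord_cons.1 hword.right).2 h₃, List.prod_append, List.prod_cons,
    List.prod_append, List.prod_cons, ρ_mul, ρ_mul, ρ_mul, ρ_mul, ρ_ρ_inv,
    coord_ρ_of_notMem hs hl.left h₁, ρ_simpleRoot_self hs, map_neg, map_neg, map_neg, ρ_simple hs,
    map_sub, map_smul, coord_ρ_of_notMem hs hword.left h₂, coord_simpleRoot_self hs,
    smul_eq_mul, mul_one] at hcoord
  exact (eq_of_inner_eq_two (inner_simpleRoot_self hs) (inner_ρ_simpleRoot_self hs _)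
    (by linarith)).symm

theorem len_prod_lt_of_count_eq_two (hs : s ∈ D.S) {l : List D.W} (hl : D.IsWord l)
    (h : l.count s = 2) (hsupp : ¬ D.InSupport l.prod s) : D.len l.prod < l.length := by
  obtain ⟨l₁, l₂, l₃, rfl, h₁, h₂, h₃⟩ := exists_eq_append_of_count_eq_two h
  have hcomm := mul_eq_mul_of_ρ_simpleRoot hs hs
    (Or.inl (ρ_simpleRoot_of_not_inSupport hs hl h₁ h₂ h₃ hsupp))
  have hprod : (l₁ ++ s :: (l₂ ++ s :: l₃)).prod = (l₁ ++ (l₂ ++ l₃)).prod := by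
    simp only [List.prod_append, List.prod_cons]
    rw [← mul_assoc l₂.prod, ← hcomm, mul_assoc s, simple_mul_simple_mul hs]
  have hsub : (l₁ ++ (l₂ ++ l₃)).Sublist (l₁ ++ s :: (l₂ ++ s :: l₃)) := by simp
  have := (hl.sublist hsub).len_prod_le
  rw [hprod]
  simp only [List.length_append, List.length_cons] at this ⊢
  omega

theorem IsReduced.subset_of_length_le {F m : List D.W} (hm : D.IsReduced m) (hF : F.Nodup)
    (hFm : F ⊆ m) (hsupp : ∀ x ∈ m, D.InSupport m.prod x → x ∈ F)
    (hlen : m.length ≤ F.length + 2) : m ⊆ F := by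
  intro x hx
  by_contra hxF
  have hxS := hm.1 x hx
  have hxsupp : ¬ D.InSupport m.prod x := fun h => hxF (hsupp x hx h)
  have hone : m.count x ≠ 1 := fun h => hxsupp (inSupport_of_count_eq_one hxS hm.1 h)
  have htwo : m.count x ≠ 2 := fun h =>
    (len_prod_lt_of_count_eq_two hxS hm.1 h hxsupp).ne hm.2
  have hpos : 0 < m.count x := List.count_pos_iff.2 hx
  have := (replicate_append_subperm hF hxF hFm (k := 3) (by omega)).length_le
  rw [List.length_append, List.length_replicate] at this
  omega

theorem exists_word_of_length {m : List D.W} {f : D.W} (hf : f ∈ D.S) {n : ℕ}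
    (hn : m.length ≤ n) (hmod : m.length % 2 = n % 2) :
    ∃ l ⊆ f :: m, l.length = n ∧ l.prod = m.prod := by
  obtain ⟨k, rfl⟩ : ∃ k, n = m.length + 2 * k := ⟨(n - m.length) / 2, by omega⟩
  refine ⟨m ++ List.replicate (2 * k) f, fun x hx => ?_, by simp, ?_⟩
  · rcases List.mem_append.1 hx with h | h
    · exact List.mem_cons_of_mem f h
    · exact List.eq_of_mem_replicate h ▸ List.mem_cons_self
  · rw [List.prod_append, List.prod_replicate, pow_mul, pow_two, D.hS_inv f hf, one_pow, mul_one]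

theorem isReduced_of_forall_prod_ne {l F : List D.W} (hl : D.IsWord l) (hF : F.Nodup)
    (hFS : D.IsWord F) (hlF : l ⊆ F) (hsupp : ∀ x ∈ F, D.InSupport l.prod x)
    (hlen : l.length ≤ F.length + 4)
    (hne : ∀ m ⊆ F, m.length + 2 = l.length → m.prod ≠ l.prod) : D.IsReduced l := by
  refine ⟨hl, hl.len_prod_le.eq_of_not_lt fun hlt => ?_⟩
  have hmod := hl.len_prod_mod_two
  obtain ⟨m, hm, hmlen, hmprod⟩ := D.exists_reduced_word l.prod
  have hFm : F ⊆ m := fun x hx => InSupport.mem (hFS x hx) hm (hmprod ▸ hsupp x hx)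
  have hmF : m ⊆ F :=
    IsReduced.subset_of_length_le ⟨hm, hmprod ▸ hmlen.symm⟩ hF hFm
      (fun x hx h => hlF (InSupport.mem (hm x hx) hl (hmprod ▸ h))) (by omega)
  obtain ⟨f, hf⟩ := List.exists_mem_of_length_pos (Nat.zero_lt_of_lt hlt)
  obtain ⟨m', hm'sub, hm'len, hm'prod⟩ :=
    exists_word_of_length (m := m) (hl f hf) (n := l.length - 2) (by omega) (by omega)
  exact hne m' (fun x hx => (List.mem_cons.1 (hm'sub hx)).elim (· ▸ hlF hf) (hmF ·))
    (by omega) (hm'prod.trans hmprod)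

end Reduced
end CoxeterRootSystem

/-! ### Irreducible components -/

namespace CoxeterRootSystem

variable {V : Type} [NormedAddCommGroup V] [InnerProductSpace ℝ V] (D : CoxeterRootSystem V)

section Components

/-- `C` is a connected component of the graph on `S` joining non-orthogonal simple roots;
connectedness is encoded as an induction principle. -/
structure IsComponent (C : Set D.W) : Prop where
  subset : C ⊆ D.S
  closed : ∀ t ∈ C, ∀ u ∈ D.S, ⟪D.simpleRoot t, D.simpleRoot u⟫ ≠ 0 → u ∈ C
  induction : ∀ p : D.W → Prop, (∃ t ∈ C, p t) →
    (∀ t ∈ C, ∀ u ∈ C, ⟪D.simpleRoot t, D.simpleRoot u⟫ ≠ 0 → p t → p u) → ∀ u ∈ C, p u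

/-- The normalized roots in the `W`-orbits of the simple roots of `C`. -/
def IsRoot (C : Set D.W) (x : V) : Prop := ∃ w, ∃ t ∈ C, x = D.ρ w (D.simpleRoot t)

variable {D}

theorem exists_isComponent {s : D.W} (hs : s ∈ D.S) : ∃ C, D.IsComponent C ∧ s ∈ C := by
  let Adj (t u : D.W) : Prop := t ∈ D.S ∧ u ∈ D.S ∧ ⟪D.simpleRoot t, D.simpleRoot u⟫ ≠ 0
  have : Std.Symm Adj := ⟨fun t u h => ⟨h.2.1, h.1, by rw [real_inner_comm]; exact h.2.2⟩⟩
  have hS (t : D.W) (h : Relation.ReflTransGen Adj s t) : t ∈ D.S := by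
    rcases h with _ | ⟨_, h⟩
    exacts [hs, h.2.1]
  refine ⟨{t | Relation.ReflTransGen Adj s t},
    ⟨hS, fun t ht u hu h => ht.tail ⟨hS t ht, hu, h⟩, ?_⟩, .refl⟩
  rintro p ⟨t, ht, hpt⟩ hstep u hu
  have htu : Relation.ReflTransGen Adj t u := (Relation.ReflTransGen.stdSymm.symm _ _ ht).trans hu
  clear hu
  induction htu with
  | refl => exact hpt
  | @tail b c hb hc ih => exact hstep b (ht.trans hb) c (ht.trans (hb.tail hc)) hc.2.2 ih

variable {C : Set D.W}

theorem isRoot_ρ_simpleRoot (w : D.W) {t : D.W} (ht : t ∈ C) :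
    D.IsRoot C (D.ρ w (D.simpleRoot t)) := ⟨w, t, ht, rfl⟩

theorem isRoot_simpleRoot {t : D.W} (ht : t ∈ C) : D.IsRoot C (D.simpleRoot t) :=
  ⟨1, t, ht, (ρ_one _).symm⟩

theorem IsRoot.map_ρ {x : V} (h : D.IsRoot C x) (g : D.W) : D.IsRoot C (D.ρ g x) := by
  obtain ⟨w, t, ht, rfl⟩ := h
  exact ⟨g * w, t, ht, (ρ_mul g w _).symm⟩

section

variable (hC : D.IsComponent C)
include hC

theorem IsRoot.inner_self {x : V} (h : D.IsRoot C x) : ⟪x, x⟫ = 2 := by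
  obtain ⟨w, t, ht, rfl⟩ := h
  exact inner_ρ_simpleRoot_self (hC.subset ht) w

theorem IsRoot.exists_reflection {x : V} (h : D.IsRoot C x) :
    ∃ r : D.W, ∀ v, D.ρ r v = v - ⟪x, v⟫ • x := by
  obtain ⟨w, t, ht, rfl⟩ := h
  exact ⟨w * t * w⁻¹, ρ_conj_simple (hC.subset ht) w⟩

theorem IsRoot.reflect {x y : V} (hx : D.IsRoot C x) (hy : D.IsRoot C y) :
    D.IsRoot C (y - ⟪x, y⟫ • x) := by
  obtain ⟨r, hr⟩ := hx.exists_reflection hC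
  exact hr y ▸ hy.map_ρ r

theorem IsRoot.neg {x : V} (h : D.IsRoot C x) : D.IsRoot C (-x) := by
  have := h.reflect hC h
  rwa [h.inner_self hC, two_smul, sub_add_cancel_left] at this

theorem IsComponent.inner_eq_zero {s u : D.W} (hs : s ∈ D.S) (hsC : s ∉ C) (hu : u ∈ C) :
    ⟪D.simpleRoot s, D.simpleRoot u⟫ = 0 := by
  by_contra h
  exact hsC (hC.closed u hu s hs (by rwa [real_inner_comm]))

theorem inner_ρ_simpleRoot_of_notMem {s t : D.W} (hs : s ∈ D.S) (hsC : s ∉ C) (ht : t ∈ C)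
    (w : D.W) : ⟪D.simpleRoot s, D.ρ w (D.simpleRoot t)⟫ = 0 := by
  induction w using word_induction generalizing s with
  | one => rw [ρ_one, hC.inner_eq_zero hs hsC ht]
  | simple_mul u hu w ih =>
    rw [ρ_mul, ρ_simple hu, inner_sub_right, inner_smul_right, ih hs hsC]
    by_cases huC : u ∈ C
    · rw [hC.inner_eq_zero hs hsC huC, mul_zero, sub_zero]
    · rw [ih hu huC, zero_mul, sub_zero]

theorem hasSeparator_of_component {s : D.W} (hs : s ∈ C)
    (h : ∀ t ∈ C, ∀ w, D.SameSign t w s ∨ t * w = w * s) : D.HasSeparator s := by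
  refine hasSeparator_of_sameSign (hC.subset hs) fun t ht w => ?_
  by_cases htC : t ∈ C
  · exact h t htC w
  · exact .inl (sameSign_of_inner_eq_zero ht (inner_ρ_simpleRoot_of_notMem hC ht htC hs w))

end

end Components

section RankTwo

variable {D} {C : Set D.W}

theorem eq_of_forall_ρ_simpleRoot_eq {u w : D.W}
    (h : ∀ s ∈ D.S, D.ρ u (D.simpleRoot s) = D.ρ w (D.simpleRoot s)) : u = w := by
  refine D.hρ_inj u w (LinearEquiv.toLinearMap_injective ?_)
  refine LinearMap.ext_on D.hα_span ?_
  rintro _ ⟨s, hs, rfl⟩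
  rw [LinearEquiv.coe_coe, LinearEquiv.coe_coe, ← rootScale_smul_simpleRoot hs, map_smul,
    map_smul, h s hs]

theorem IsComponent.ρ_simpleRoot_of_notMem (hC : D.IsComponent C) {l : List D.W}
    (hl : ∀ u ∈ l, u ∈ C) {s : D.W} (hs : s ∈ D.S) (hsC : s ∉ C) :
    D.ρ l.prod (D.simpleRoot s) = D.simpleRoot s := by
  induction l with
  | nil => rw [List.prod_nil, ρ_one]
  | cons a l ih =>
    have ha := hl a List.mem_cons_self
    rw [List.prod_cons, ρ_mul, ih fun u hu => hl u (List.mem_cons_of_mem a hu),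
      ρ_eq_self_of_inner_eq_zero (hC.subset ha)]
    rw [real_inner_comm, hC.inner_eq_zero hs hsC ha]

open Classical in
theorem IsComponent.ρ_filter_prod (hC : D.IsComponent C) {l : List D.W} (hl : D.IsWord l)
    {s : D.W} (hs : s ∈ C) :
    D.ρ (l.filter (· ∈ C)).prod (D.simpleRoot s) = D.ρ l.prod (D.simpleRoot s) := by
  induction l with
  | nil => rfl
  | cons a l ih =>
    obtain ⟨ha, hl⟩ := isWord_cons.1 hl
    by_cases haC : a ∈ C
    · rw [List.filter_cons_of_pos (by simpa), List.prod_cons, List.prod_cons, ρ_mul, ρ_mul, ih hl]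
    · rw [List.filter_cons_of_neg (by simpa), ih hl, List.prod_cons, ρ_mul,
        ρ_eq_self_of_inner_eq_zero ha (inner_ρ_simpleRoot_of_notMem hC ha haC hs _)]

theorem IsComponent.exists_reduced_word (hC : D.IsComponent C) {l : List D.W}
    (hl : ∀ u ∈ l, u ∈ C) :
    ∃ m, (∀ u ∈ m, u ∈ C) ∧ D.IsReduced m ∧ m.prod = l.prod := by
  classical
  obtain ⟨m, hm, hmlen, hmprod⟩ := D.exists_reduced_word l.prod
  have hfilter (u : D.W) (hu : u ∈ m.filter (· ∈ C)) : u ∈ C := by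
    simpa using List.of_mem_filter hu
  have hword : D.IsWord (m.filter (· ∈ C)) := hm.sublist List.filter_sublist
  have hprod : (m.filter (· ∈ C)).prod = l.prod := by
    refine eq_of_forall_ρ_simpleRoot_eq fun s hs => ?_
    by_cases hsC : s ∈ C
    · rw [hC.ρ_filter_prod hm hsC, hmprod]
    · rw [hC.ρ_simpleRoot_of_notMem hfilter hs hsC, hC.ρ_simpleRoot_of_notMem hl hs hsC]
  refine ⟨_, hfilter, ⟨hword, hword.len_prod_le.antisymm ?_⟩, hprod⟩
  rw [hprod, ← hmlen]
  exact List.length_filter_le _ _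

theorem IsComponent.exists_word_ρ_eq (hC : D.IsComponent C) {s : D.W} (hs : s ∈ C) (w : D.W) :
    ∃ l : List D.W, (∀ u ∈ l, u ∈ C) ∧
      D.ρ l.prod (D.simpleRoot s) = D.ρ w (D.simpleRoot s) := by
  classical
  obtain ⟨l, hl, rfl⟩ := D.exists_word w
  exact ⟨_, fun u hu => by simpa using List.of_mem_filter hu, hC.ρ_filter_prod hl hs⟩

theorem IsReduced.tail {a : D.W} {l : List D.W} (h : D.IsReduced (a :: l)) : D.IsReduced l := by
  obtain ⟨hword, hlen⟩ := h
  obtain ⟨ha, hl⟩ := isWord_cons.1 hword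
  rw [List.prod_cons, List.length_cons] at hlen
  have hle := hl.len_prod_le
  rcases len_simple_mul ha l.prod with h | h <;> exact ⟨hl, by omega⟩

theorem IsReduced.ne_of_cons_cons {a b : D.W} {l : List D.W} (h : D.IsReduced (a :: b :: l)) :
    a ≠ b := by
  rintro rfl
  have hlen := h.2
  rw [List.prod_cons, List.prod_cons, simple_mul_simple_mul (h.1 a List.mem_cons_self),
    h.tail.tail.2, List.length_cons, List.length_cons] at hlen
  omega

theorem IsReduced.eq_of_dihedral {a b : D.W} {l m : List D.W} (hl : D.IsReduced (a :: l))
    (hm : D.IsReduced (a :: m)) (hlab : ∀ u ∈ l, u = a ∨ u = b) (hmab : ∀ u ∈ m, u = a ∨ u = b)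
    (hlen : l.length = m.length) : l = m := by
  induction l generalizing a b m with
  | nil => exact (List.length_eq_zero_iff.1 hlen.symm).symm
  | cons c l ih =>
    obtain _ | ⟨d, m⟩ := m
    · simp at hlen
    obtain rfl := (hlab c List.mem_cons_self).resolve_left hl.ne_of_cons_cons.symm
    obtain rfl := (hmab d List.mem_cons_self).resolve_left hm.ne_of_cons_cons.symm
    rw [ih hl.tail hm.tail (fun u hu => (hlab u (List.mem_cons_of_mem _ hu)).symm)
      (fun u hu => (hmab u (List.mem_cons_of_mem _ hu)).symm) (Nat.succ.inj hlen)]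

theorem exists_len_of_not_sameSign {t s : D.W} (ht : t ∈ D.S) (hs : s ∈ D.S) {w : D.W}
    (h : ¬ D.SameSign t w s) :
    ∃ u, (u = w ∨ u = w * s) ∧ D.len (u * s) = D.len u + 1 ∧ D.len (t * u) = D.len u + 1 ∧
      D.len (t * u * s) = D.len u := by
  rw [sameSign_iff hs] at h
  have hss : w * s * s = w := by rw [mul_assoc, D.hS_inv s hs, mul_one]
  have htss : t * (w * s) * s = t * w := by rw [← mul_assoc, mul_assoc _ s, D.hS_inv s hs, mul_one]
  have hw := len_mul_simple hs w
  have htw := len_mul_simple hs (t * w)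
  have hl := len_simple_mul ht w
  have hr := len_simple_mul ht (w * s)
  rw [← mul_assoc] at hr
  by_cases hup : D.len (w * s) = D.len w + 1
  · exact ⟨w, .inl rfl, hup, by omega, by omega⟩
  · refine ⟨w * s, .inr rfl, ?_, ?_, ?_⟩
    · rw [hss]; omega
    · rw [← mul_assoc]; omega
    · rw [htss]; omega

theorem mul_eq_mul_of_not_sameSign_of_rank_two (hC : D.IsComponent C) {t s q : D.W} (ht : t ∈ C)
    (hs : s ∈ C) (hCq : ∀ u ∈ C, u = t ∨ u = q) {l : List D.W} (hl : ∀ u ∈ l, u ∈ C)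
    (h : ¬ D.SameSign t l.prod s) : t * l.prod = l.prod * s := by
  have htS := hC.subset ht
  have hsS := hC.subset hs
  obtain ⟨u, hu, hus, htu, htus⟩ := exists_len_of_not_sameSign htS hsS h
  have hword : ∃ m : List D.W, (∀ x ∈ m, x ∈ C) ∧ m.prod = u := by
    rcases hu with rfl | rfl
    · exact ⟨l, hl, rfl⟩
    · exact ⟨l ++ [s], by simpa [or_imp, forall_and] using ⟨hl, hs⟩, by simp⟩
  obtain ⟨m, hm, rfl⟩ := hword
  obtain ⟨m₁, hm₁, hred₁, hprod₁⟩ := hC.exists_reduced_word hm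
  obtain ⟨m₂, hm₂, hred₂, hprod₂⟩ := hC.exists_reduced_word (l := t :: (m ++ [s]))
    (by simpa [or_imp, forall_and] using ⟨ht, hm, hs⟩)
  have hprod₂' : m₂.prod = t * m.prod * s := by simp [hprod₂, mul_assoc]
  have hlen₁ : m₁.length = D.len m.prod := by rw [← hred₁.2, hprod₁]
  have hlen₂ : m₂.length = D.len m.prod := by rw [← hred₂.2, hprod₂', htus]
  have hcons₁ : D.IsReduced (t :: m₁) :=
    ⟨isWord_cons.2 ⟨htS, hred₁.1⟩, by rw [List.prod_cons, hprod₁, htu, List.length_cons, hlen₁]⟩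
  have hcons₂ : D.IsReduced (t :: m₂) := by
    refine ⟨isWord_cons.2 ⟨htS, hred₂.1⟩, ?_⟩
    rw [List.prod_cons, hprod₂', mul_assoc, simple_mul_simple_mul htS, hus, List.length_cons, hlen₂]
  have heq : m.prod = t * m.prod * s := by
    rw [← hprod₂', ← hprod₁, hcons₁.eq_of_dihedral hcons₂ (fun x hx => hCq x (hm₁ x hx))
      (fun x hx => hCq x (hm₂ x hx)) (hlen₁.trans hlen₂.symm)]
  have hcomm : t * m.prod = m.prod * s := by
    conv_rhs => rw [heq, mul_assoc _ s, D.hS_inv s hsS, mul_one]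
  rcases hu with hu | hu
  · rwa [hu] at hcomm
  · rw [hu, ← mul_assoc] at hcomm
    exact mul_right_cancel hcomm

theorem hasSeparator_of_rank_two (hC : D.IsComponent C) {s : D.W} (hs : s ∈ C)
    (hrank : ∀ t ∈ C, ∃ q, ∀ u ∈ C, u = t ∨ u = q) : D.HasSeparator s := by
  have hsS := hC.subset hs
  refine hasSeparator_of_component hC hs fun t ht w => or_iff_not_imp_left.2 fun hw => ?_
  obtain ⟨q, hq⟩ := hrank t ht
  obtain ⟨l, hl, hlw⟩ := hC.exists_word_ρ_eq hs w
  rw [← sameSign_congr hsS (.inl hlw)] at hw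
  have hcomm := mul_eq_mul_of_not_sameSign_of_rank_two hC ht hs hq hl hw
  have hfix : s * (l.prod⁻¹ * w) = l.prod⁻¹ * w * s :=
    mul_eq_mul_of_ρ_simpleRoot hsS hsS (.inl (by rw [ρ_mul, ← hlw, ρ_inv_ρ]))
  calc t * w = t * l.prod * (l.prod⁻¹ * w) := by group
    _ = l.prod * (s * (l.prod⁻¹ * w)) := by rw [hcomm, mul_assoc]
    _ = w * s := by rw [hfix]; group

end RankTwo
end CoxeterRootSystem

/-! ### Inner products of roots -/

namespace CoxeterRootSystem

variable {V : Type} [NormedAddCommGroup V] [InnerProductSpace ℝ V] (D : CoxeterRootSystem V)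

section RankThree

/-- The nonzero values `2 cos (k π / 5)` of inner products of normalized roots in a dihedral
system of order `10`: the golden ratio, its inverse and their negatives. -/
def IsGolden (c : ℝ) : Prop := (c ^ 2) ^ 2 - 3 * c ^ 2 + 1 = 0

/-- The elements of `W` that map the subspace `E` onto itself. -/
def subspaceStabilizer (E : Submodule ℝ V) : Subgroup D.W where
  carrier := {g | ∀ v ∈ E, D.ρ g v ∈ E ∧ D.ρ g⁻¹ v ∈ E}
  one_mem' v hv := by rw [inv_one, ρ_one]; exact ⟨hv, hv⟩
  mul_mem' {g h} hg hh v hv := by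
    rw [mul_inv_rev, ρ_mul, ρ_mul]
    exact ⟨(hg _ (hh v hv).1).1, (hh _ (hg v hv).2).2⟩
  inv_mem' {g} hg v hv := by rw [inv_inv]; exact (hg v hv).symm

variable {D}

theorem mem_subspaceStabilizer_of_reflection {E : Submodule ℝ V} {x : V} (hx : x ∈ E) {r : D.W}
    (hr : ∀ v, D.ρ r v = v - ⟪x, v⟫ • x) : r ∈ D.subspaceStabilizer E := by
  refine fun v hv => ⟨hr v ▸ E.sub_mem hv (E.smul_mem _ hx), ?_⟩
  have h := hr (D.ρ r⁻¹ v)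
  rw [ρ_ρ_inv, eq_sub_iff_add_eq] at h
  exact h ▸ E.add_mem hv (E.smul_mem _ hx)

variable {C : Set D.W} {x y : V}

theorem eq_zero_of_forall_inner_simpleRoot {v : V} (h : ∀ s ∈ D.S, ⟪D.simpleRoot s, v⟫ = 0) :
    v = 0 := by
  have hzero : innerₛₗ ℝ v = 0 := by
    refine LinearMap.ext_on D.hα_span ?_
    rintro _ ⟨s, hs, rfl⟩
    rw [innerₛₗ_apply_apply, ← rootScale_smul_simpleRoot hs, inner_smul_right, real_inner_comm,
      h s hs, mul_zero, LinearMap.zero_apply]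
  rw [← inner_self_eq_zero (𝕜 := ℝ), ← innerₛₗ_apply_apply, hzero, LinearMap.zero_apply]

theorem IsComponent.exists_inner_simpleRoot_ne_zero (hC : D.IsComponent C)
    (hx : D.IsRoot C x) : ∃ u ∈ C, ⟪x, D.simpleRoot u⟫ ≠ 0 := by
  by_contra! h
  suffices hzero : x = 0 by simpa [hzero] using hx.inner_self hC
  refine eq_zero_of_forall_inner_simpleRoot (D := D) fun u hu => ?_
  by_cases huC : u ∈ C
  · rw [real_inner_comm, h u huC]
  · obtain ⟨w, t, ht, rfl⟩ := hx
    exact inner_ρ_simpleRoot_of_notMem hC hu huC ht w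

theorem IsComponent.exists_simpleRoot_notMem_span (hC : D.IsComponent C) (hcard : 2 < C.ncard)
    (hx : D.IsRoot C x) (y : V) :
    ∃ u ∈ C, D.simpleRoot u ∉ Submodule.span ℝ {x, y} ∧
      (⟪x, D.simpleRoot u⟫ ≠ 0 ∨ ⟪y, D.simpleRoot u⟫ ≠ 0) := by
  classical
  by_contra! h
  have hspan : ∀ u ∈ C, D.simpleRoot u ∈ Submodule.span ℝ {x, y} := by
    refine hC.induction _ ?_ fun t _ u hu htu ht => ?_
    · obtain ⟨u, hu, hxu⟩ := hC.exists_inner_simpleRoot_ne_zero hx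
      exact ⟨u, hu, of_not_not fun h' => hxu (h u hu h').1⟩
    · by_contra h'
      obtain ⟨a, b, hab⟩ := Submodule.mem_span_pair.1 ht
      obtain ⟨hxu, hyu⟩ := h u hu h'
      refine htu ?_
      rw [← hab, inner_add_left, inner_smul_left, inner_smul_left, hxu, hyu, mul_zero, mul_zero,
        add_zero]
  have hindep := D.hα_indep.comp _ (Set.inclusion_injective hC.subset)
  have hle := linearIndependent_le_span' _ hindep ({x, y} : Finset V) ?_
  · rw [← Nat.cast_card, Nat.card_coe_set_eq] at hle
    have := hle.trans (Nat.cast_le.2 ((Fintype.card_coe _).trans_le Finset.card_le_two))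
    exact absurd (Nat.cast_le.1 this) (not_le.2 hcard)
  · rintro _ ⟨u, rfl⟩
    change D.α u ∈ _
    rw [Finset.coe_pair, ← rootScale_smul_simpleRoot (hC.subset u.2)]
    exact Submodule.smul_mem _ _ (hspan u u.2)

theorem inner_reflection_reflection_self (hx : ⟪x, x⟫ = 2) (hy : ⟪y, y⟫ = 2) {p : V}
    (hp : p ∈ Submodule.span ℝ {x, y}) :
    ⟪p - ⟪y, p⟫ • y - ⟪x, p - ⟪y, p⟫ • y⟫ • x, p⟫ = (⟪x, y⟫ ^ 2 / 2 - 1) * ⟪p, p⟫ := by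
  obtain ⟨a, b, rfl⟩ := Submodule.mem_span_pair.1 hp
  simp only [inner_add_left, inner_add_right, inner_sub_left, inner_sub_right, inner_smul_left,
    inner_smul_right, conj_trivial, hx, hy, real_inner_comm y x]
  ring

theorem inner_reflection_reflection_add_smul (hx : ⟪x, x⟫ = 2) (hy : ⟪y, y⟫ = 2) {n p : V}
    (hxn : ⟪x, n⟫ = 0) (hyn : ⟪y, n⟫ = 0) (hp : p ∈ Submodule.span ℝ {x, y}) (hpn : ⟪p, n⟫ = 0)
    {τ : V →ₗ[ℝ] V} (hτ : ∀ v, τ v = v - ⟪y, v⟫ • y - ⟪x, v - ⟪y, v⟫ • y⟫ • x) (c : ℝ) :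
    ⟪τ (p + c • n), p + c • n⟫ = (⟪x, y⟫ ^ 2 / 2 - 1) * ⟪p, p⟫ + c ^ 2 * ⟪n, n⟫ := by
  have hτn : τ n = n := by simp [hτ, hxn, hyn]
  have hτp : ⟪τ p, p⟫ = (⟪x, y⟫ ^ 2 / 2 - 1) * ⟪p, p⟫ := by
    rw [hτ, inner_reflection_reflection_self hx hy hp]
  have hτpn : ⟪τ p, n⟫ = 0 := by
    simp [hτ, inner_sub_left, inner_smul_left, hxn, hyn, hpn]
  rw [map_add, map_smul, hτn, inner_add_left, inner_add_right, inner_add_right, hτp,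
    inner_smul_right, hτpn, inner_smul_left, inner_smul_left, inner_smul_right,
    real_inner_comm p n, hpn, conj_trivial]
  ring

theorem inner_lt_inner_reflection_reflection (hx : ⟪x, x⟫ = 2) (hy : ⟪y, y⟫ = 2) {n p : V} {c : ℝ}
    (hxy : 3 ≤ ⟪x, y⟫ ^ 2) (hxy' : ⟪x, y⟫ ^ 2 < 4) (hxn : ⟪x, n⟫ = 0) (hyn : ⟪y, n⟫ = 0)
    (hp : p ∈ Submodule.span ℝ {x, y}) (hne : p + c • n ≠ n) (hne' : p + c • n ≠ -n)
    (hn : ⟪p + c • n, p + c • n⟫ = ⟪n, n⟫)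
    {τ : V →ₗ[ℝ] V} (hτ : ∀ v, τ v = v - ⟪y, v⟫ • y - ⟪x, v - ⟪y, v⟫ • y⟫ • x) :
    τ (p + c • n) ≠ p + c • n ∧ τ (p + c • n) ≠ -(p + c • n) ∧
      ⟪p + c • n, n⟫ < ⟪τ (p + c • n), p + c • n⟫ := by
  have hpn : ⟪p, n⟫ = 0 := by
    obtain ⟨a, b, rfl⟩ := Submodule.mem_span_pair.1 hp
    simp [inner_add_left, inner_smul_left, hxn, hyn]
  have hinner := inner_reflection_reflection_add_smul hx hy hxn hyn hp hpn hτ c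
  have hnorm : ⟪p, p⟫ + c ^ 2 * ⟪n, n⟫ = ⟪n, n⟫ := by
    simp only [inner_add_left, inner_add_right, inner_smul_left, inner_smul_right, conj_trivial,
      hpn, real_inner_comm p n] at hn
    linarith
  have hp0 : p ≠ 0 := by
    rintro rfl
    have hn0 : n ≠ 0 := fun h => hne (by rw [h, smul_zero, add_zero])
    rw [inner_zero_left, zero_add, mul_eq_right₀ (inner_self_ne_zero.2 hn0),
      sq_eq_one_iff] at hnorm
    rcases hnorm with rfl | rfl
    · exact hne (by rw [one_smul, zero_add])
    · exact hne' (by rw [neg_one_smul, zero_add])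
  have hpos : 0 < ⟪p, p⟫ := real_inner_self_pos.2 hp0
  have hN : 0 ≤ ⟪n, n⟫ := real_inner_self_nonneg
  have hhalf : ⟪p, p⟫ / 2 ≤ (⟪x, y⟫ ^ 2 / 2 - 1) * ⟪p, p⟫ := by nlinarith
  refine ⟨fun h => ?_, fun h => ?_, lt_of_not_ge fun h => ?_⟩
  · rw [h, hn] at hinner
    nlinarith
  · rw [h, inner_neg_left, hn] at hinner
    linarith [mul_nonneg (sq_nonneg c) hN]
  · rw [hinner, inner_add_left, hpn, inner_smul_left, conj_trivial] at h
    have hle : (1 - c) ^ 2 * ⟪n, n⟫ ≤ 0 := by linarith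
    rcases mul_eq_zero.1 (hle.antisymm (mul_nonneg (sq_nonneg _) hN)) with h0 | h0
    · rw [← sub_eq_zero.1 (pow_eq_zero_iff two_ne_zero |>.1 h0)] at hnorm
      linarith
    · rw [h0] at hnorm
      linarith

theorem reflection_orthogonal_part_ne {p n : V} (hp : p ∈ Submodule.span ℝ {x, y})
    (hn : n ∈ (Submodule.span ℝ {x, y})ᗮ) (hn0 : n ≠ 0)
    (hne : ⟪x, p + n⟫ ≠ 0 ∨ ⟪y, p + n⟫ ≠ 0) :
    n - ⟪p + n, n⟫ • (p + n) ≠ n ∧ n - ⟪p + n, n⟫ • (p + n) ≠ -n := by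
  have hpn : ⟪p + n, n⟫ = ⟪n, n⟫ := by
    rw [inner_add_left, Submodule.inner_right_of_mem_orthogonal hp hn, zero_add]
  have hnn : ⟪n, n⟫ ≠ 0 := inner_self_ne_zero.2 hn0
  have hxn := Submodule.inner_right_of_mem_orthogonal
    (Submodule.subset_span (Set.mem_insert x {y})) hn
  have hyn := Submodule.inner_right_of_mem_orthogonal
    (Submodule.subset_span (Set.mem_insert_of_mem x (Set.mem_singleton y))) hn
  have horth {v : V} (hv : ⟪v, n⟫ = 0) (hvp : ⟪v, p + n⟫ ≠ 0) (ε : ℝ) :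
      n - ⟪p + n, n⟫ • (p + n) ≠ ε • n := by
    intro h
    refine mul_ne_zero hnn hvp (neg_eq_zero.1 ?_)
    rw [← zero_sub, ← hv, ← hpn, ← inner_smul_right, ← inner_sub_right, h, inner_smul_right, hv,
      mul_zero]
  have hne' (ε : ℝ) : n - ⟪p + n, n⟫ • (p + n) ≠ ε • n := hne.elim (horth hxn · ε) (horth hyn · ε)
  exact ⟨by simpa using hne' 1, by simpa using hne' (-1)⟩

theorem exists_maximal_rotation {E : Submodule ℝ V} {n : V} {r : D.W}
    (hr : r ∈ D.subspaceStabilizer E) (hrn : D.ρ r n ≠ n) (hrn' : D.ρ r n ≠ -n) :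
    ∃ g ∈ D.subspaceStabilizer E, D.ρ g n ≠ n ∧ D.ρ g n ≠ -n ∧
      ∀ τ ∈ D.subspaceStabilizer E, D.ρ τ (D.ρ g n) ≠ D.ρ g n → D.ρ τ (D.ρ g n) ≠ -D.ρ g n →
        ⟪D.ρ τ (D.ρ g n), D.ρ g n⟫ ≤ ⟪D.ρ g n, n⟫ := by
  obtain ⟨g, ⟨hg, hgn, hgn'⟩, hmax⟩ := Set.exists_max_image
    {g | g ∈ D.subspaceStabilizer E ∧ D.ρ g n ≠ n ∧ D.ρ g n ≠ -n} (fun g => ⟪D.ρ g n, n⟫)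
    (Set.toFinite _) ⟨r, hr, hrn, hrn'⟩
  refine ⟨g, hg, hgn, hgn', fun τ hτ hτn hτn' => ?_⟩
  have hconj : D.ρ (g⁻¹ * τ * g) n = D.ρ g⁻¹ (D.ρ τ (D.ρ g n)) := by rw [ρ_mul, ρ_mul]
  have hle := hmax (g⁻¹ * τ * g) ⟨mul_mem (mul_mem (inv_mem hg) hτ) hg,
    fun h => hτn (by rw [← ρ_ρ_inv g (D.ρ τ _), ← hconj, h]), fun h => hτn' ?_⟩
  · rwa [hconj, inner_ρ_left, inv_inv] at hle
  · rw [← map_neg, ← h, hconj, ρ_ρ_inv]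

/-- The product of the reflections in `x` and `y` turns their plane by at most `π / 3` when
`3 ≤ ⟪x, y⟫ ^ 2`. Let `n` be the part of `z` orthogonal to that plane: among the conjugates of
this product there is then one moving `n` by arbitrarily little. -/
theorem inner_sq_lt_three (hC : D.IsComponent C) {z : V} (hx : D.IsRoot C x) (hy : D.IsRoot C y)
    (hz : D.IsRoot C z) (hzspan : z ∉ Submodule.span ℝ {x, y}) (hne : ⟪x, z⟫ ≠ 0 ∨ ⟪y, z⟫ ≠ 0)
    (hxy : ⟪x, y⟫ ^ 2 < 4) : ⟪x, y⟫ ^ 2 < 3 := by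
  by_contra! h3
  let P := Submodule.span ℝ {x, y}
  have hxP : x ∈ P := Submodule.subset_span (Set.mem_insert x {y})
  have hyP : y ∈ P := Submodule.subset_span (Set.mem_insert_of_mem x (Set.mem_singleton y))
  have : FiniteDimensional ℝ P := FiniteDimensional.span_of_finite ℝ (Set.toFinite _)
  obtain ⟨q, hq, n, hn, rfl⟩ := P.exists_add_mem_mem_orthogonal z
  have hn0 : n ≠ 0 := by
    rintro rfl
    exact hzspan (by rwa [add_zero])
  let E := P ⊔ ℝ ∙ n
  have hPE : P ≤ E := le_sup_left
  have hnE : n ∈ E := (le_sup_right : ℝ ∙ n ≤ E) (Submodule.mem_span_singleton_self n)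
  obtain ⟨rx, hrx⟩ := hx.exists_reflection hC
  obtain ⟨ry, hry⟩ := hy.exists_reflection hC
  obtain ⟨rz, hrz⟩ := hz.exists_reflection hC
  have hrzn := reflection_orthogonal_part_ne hq hn hn0 hne
  rw [← hrz] at hrzn
  obtain ⟨g, hg, hgn, hgn', hmax⟩ := exists_maximal_rotation
    (mem_subspaceStabilizer_of_reflection (E.add_mem (hPE hq) hnE) hrz) hrzn.1 hrzn.2
  obtain ⟨p, hp, _, hcn, hpc⟩ := Submodule.mem_sup.1 (hg n hnE).1
  obtain ⟨c, rfl⟩ := Submodule.mem_span_singleton.1 hcn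
  rw [← hpc] at hgn hgn' hmax
  have hnorm : ⟪p + c • n, p + c • n⟫ = ⟪n, n⟫ := hpc ▸ inner_ρ_ρ g n n
  obtain ⟨hτ, hτ', hlt⟩ := inner_lt_inner_reflection_reflection (hx.inner_self hC)
    (hy.inner_self hC) h3 hxy (Submodule.inner_right_of_mem_orthogonal hxP hn)
    (Submodule.inner_right_of_mem_orthogonal hyP hn) hp hgn hgn' hnorm
    (τ := (D.ρ (rx * ry)).toLinearMap) fun v => by rw [LinearEquiv.coe_coe, ρ_mul, hrx, hry]
  exact hlt.not_ge <| hmax (rx * ry) (mul_mem (mem_subspaceStabilizer_of_reflection (hPE hxP) hrx)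
    (mem_subspaceStabilizer_of_reflection (hPE hyP) hry)) hτ hτ'

theorem inner_sq_eq_four_or_lt_three (hC : D.IsComponent C) (hcard : 2 < C.ncard)
    (hx : D.IsRoot C x) (hy : D.IsRoot C y) : ⟪x, y⟫ ^ 2 = 4 ∨ ⟪x, y⟫ ^ 2 < 3 := by
  obtain ⟨u, hu, huspan, hxyu⟩ := hC.exists_simpleRoot_notMem_span hcard hx y
  have hle := real_inner_mul_inner_self_le x y
  rw [hx.inner_self hC, hy.inner_self hC, ← sq] at hle
  refine (hle.trans_eq (by norm_num)).eq_or_lt.imp_right ?_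
  exact inner_sq_lt_three hC hx hy (isRoot_simpleRoot hu) huspan hxyu

/-- The squares of the inner products of roots are `d = 4 cos² θ`, and those of the multiples
`k θ` are `4 - (4 - d) * q ^ 2` with `q` a polynomial in `d` (times `√d` for even `k`). -/
theorem eq_of_chebyshev_eq_zero_or_one_lt {d : ℝ} (h0 : 0 ≤ d) (h3 : d < 3)
    (h₂ : d = 0 ∨ 1 < (4 - d) * d) (h₃ : (d - 1) ^ 2 = 0 ∨ 1 < (4 - d) * (d - 1) ^ 2)
    (h₄ : d * (d - 2) ^ 2 = 0 ∨ 1 < (4 - d) * (d * (d - 2) ^ 2))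
    (h₅ : (d ^ 2 - 3 * d + 1) ^ 2 = 0 ∨ 1 < (4 - d) * (d ^ 2 - 3 * d + 1) ^ 2) :
    d = 0 ∨ d = 1 ∨ d = 2 ∨ d ^ 2 - 3 * d + 1 = 0 := by
  by_contra! hne
  replace h₂ := h₂.resolve_left hne.1
  replace h₃ := h₃.resolve_left (pow_ne_zero 2 (sub_ne_zero.2 hne.2.1))
  replace h₄ := h₄.resolve_left (mul_ne_zero hne.1 (pow_ne_zero 2 (sub_ne_zero.2 hne.2.2.1)))
  replace h₅ := h₅.resolve_left (pow_ne_zero 2 hne.2.2.2)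
  have hlower : 0.267 < d := by nlinarith
  rcases le_total d 0.5 with hd | hd
  · have : (d ^ 2 - 3 * d + 1) ^ 2 ≤ 1 / 4 := by
      rw [← sq_abs]
      nlinarith [abs_nonneg (d ^ 2 - 3 * d + 1), abs_le.2
        (⟨by nlinarith, by nlinarith⟩ : -(1 / 2) ≤ d ^ 2 - 3 * d + 1 ∧ d ^ 2 - 3 * d + 1 ≤ 1 / 2)]
    nlinarith
  rcases le_total d 1.6 with hd' | hd'
  · nlinarith [mul_nonneg (sub_nonneg.2 hd) (sub_nonneg.2 hd')]
  rcases le_total d 2.4 with hd' | hd'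
  · have : (d - 2) ^ 2 ≤ 0.16 := by nlinarith
    have : (4 - d) * d ≤ 4 := by nlinarith [sq_nonneg (d - 2)]
    nlinarith [sq_nonneg (d - 2)]
  rcases le_total d 2.75 with hd' | hd'
  · have : (d ^ 2 - 3 * d + 1) ^ 2 ≤ 0.2 := by
      nlinarith [abs_le.2
        (⟨by nlinarith, by nlinarith⟩ : -0.4472 ≤ d ^ 2 - 3 * d + 1 ∧ d ^ 2 - 3 * d + 1 ≤ 0.4472)]
    nlinarith
  · have : (d ^ 2 - 3 * d + 1) ^ 2 ≤ (d - 2) ^ 2 :=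
      pow_le_pow_left₀ (by nlinarith) (by nlinarith) 2
    nlinarith [sq_nonneg (d - 3), mul_nonneg (sub_nonneg.2 hd') (sub_nonneg.2 h3.le)]

theorem IsRoot.chebyshev_step (hC : D.IsComponent C) {u v : V} (hu : D.IsRoot C u)
    (hv : D.IsRoot C v) :
    D.IsRoot C (⟪u, v⟫ • v - u) ∧ ⟪v, ⟪u, v⟫ • v - u⟫ = ⟪u, v⟫ := by
  constructor
  · rw [real_inner_comm, ← neg_sub]
    exact (hv.reflect hC hu).neg hC
  · rw [inner_sub_right, inner_smul_right, hv.inner_self hC, real_inner_comm u v]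
    ring

theorem inner_sq_eq (hC : D.IsComponent C) (hcard : 2 < C.ncard) (hx : D.IsRoot C x)
    (hy : D.IsRoot C y) :
    ⟪x, y⟫ ^ 2 = 4 ∨ ⟪x, y⟫ ^ 2 = 0 ∨ ⟪x, y⟫ ^ 2 = 1 ∨ ⟪x, y⟫ ^ 2 = 2 ∨
      IsGolden ⟪x, y⟫ := by
  refine (inner_sq_eq_four_or_lt_three hC hcard hx hy).imp_right fun h3 => ?_
  obtain ⟨c, hc⟩ : ∃ c, c = ⟪x, y⟫ := ⟨_, rfl⟩
  obtain ⟨hy₂, h₂⟩ := hx.chebyshev_step hC hy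
  obtain ⟨hy₃, h₃⟩ := hy.chebyshev_step hC hy₂
  rw [h₂] at hy₃ h₃
  obtain ⟨hy₄, h₄⟩ := hy₂.chebyshev_step hC hy₃
  rw [h₃] at hy₄ h₄
  obtain ⟨hy₅, -⟩ := hy₃.chebyshev_step hC hy₄
  rw [h₄] at hy₅
  rw [← hc] at h3 hy₂ hy₃ hy₄ hy₅ ⊢
  have key {v : V} (hv : D.IsRoot C v) (q : ℝ) (hq : ⟪x, v⟫ ^ 2 = 4 - (4 - c ^ 2) * q) :
      q = 0 ∨ 1 < (4 - c ^ 2) * q := by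
    rcases inner_sq_eq_four_or_lt_three hC hcard hx hv with h | h
    · have : (4 - c ^ 2) * q = 0 := by linarith
      exact .inl ((mul_eq_zero.1 this).resolve_left (by linarith))
    · exact .inr (by linarith)
  refine eq_of_chebyshev_eq_zero_or_one_lt (sq_nonneg c) h3 (key hy₂ _ ?_) (key hy₃ _ ?_)
    (key hy₄ _ ?_) (key hy₅ _ ?_) <;>
  simp only [inner_sub_right, inner_smul_right, hx.inner_self hC, ← hc] <;> ring

end RankThree
end CoxeterRootSystem

/-! ### The crystallographic case -/

namespace CoxeterRootSystem

variable {V : Type} [NormedAddCommGroup V] [InnerProductSpace ℝ V] (D : CoxeterRootSystem V)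

section Crystallographic

/-- No two simple roots of `C` form a bond of order five; the bonds of `C` then all have order
at most four unless `C` has rank two. -/
def IsCrystallographic (C : Set D.W) : Prop :=
  ∀ t ∈ C, ∀ u ∈ C, ¬ IsGolden ⟪D.simpleRoot t, D.simpleRoot u⟫

variable {D} {C : Set D.W} {x y z u : V} {s t : D.W}

theorem inner_mem_subring (hC : D.IsComponent C) {R : Subring ℝ}
    (hR : ∀ t ∈ C, ∀ u ∈ C, ⟪D.simpleRoot t, D.simpleRoot u⟫ ∈ R) (hx : D.IsRoot C x)
    (hy : D.IsRoot C y) : ⟪x, y⟫ ∈ R := by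
  obtain ⟨v, t, ht, rfl⟩ := hx
  obtain ⟨w, s, hs, rfl⟩ := hy
  rw [inner_ρ_left, ← ρ_mul]
  induction v⁻¹ * w using word_induction generalizing t with
  | one => rw [ρ_one]; exact hR t ht s hs
  | simple_mul u hu w ih =>
    rw [ρ_mul, ρ_simple hu, inner_sub_right, inner_smul_right]
    by_cases huC : u ∈ C
    · exact R.sub_mem (ih t ht) (R.mul_mem (ih u huC) (hR t ht u huC))
    · rw [inner_ρ_simpleRoot_of_notMem hC hu huC hs, zero_mul, sub_zero]
      exact ih t ht

/-- The embedding of `ℤ[√2]` into the real numbers. -/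
def zsqrtdTwoEmbedding : ℤ√2 →+* ℝ := Zsqrtd.lift ⟨√2, by norm_num⟩

theorem not_isGolden_zsqrtdTwoEmbedding (a : ℤ√2) : ¬ IsGolden (zsqrtdTwoEmbedding a) := by
  intro h
  have hinj : Function.Injective zsqrtdTwoEmbedding := by
    refine Zsqrtd.lift_injective _ fun n hn => ?_
    have hle : n ≤ 1 := by nlinarith
    have hge : -1 ≤ n := by nlinarith
    interval_cases n <;> simp at hn
  have hzero : (a ^ 2) ^ 2 - 3 * a ^ 2 + 1 = 0 := by
    refine hinj ?_
    simp only [map_add, map_sub, map_mul, map_pow, map_one, map_zero, map_ofNat]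
    exact h
  -- `X ^ 4 - 3 * X ^ 2 + 1` has no root in the residue field of `√2`
  have hmod := congrArg (Zsqrtd.lift (⟨0, by decide⟩ : {r : ZMod 2 // r * r = (2 : ℤ)})) hzero
  simp only [map_add, map_sub, map_mul, map_pow, map_one, map_zero, map_ofNat] at hmod
  generalize Zsqrtd.lift (⟨0, _⟩ : {r : ZMod 2 // r * r = (2 : ℤ)}) a = b at hmod
  revert b
  decide

theorem mem_range_zsqrtdTwoEmbedding {c : ℝ}
    (h : c ^ 2 = 4 ∨ c ^ 2 = 0 ∨ c ^ 2 = 1 ∨ c ^ 2 = 2) : c ∈ zsqrtdTwoEmbedding.range := by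
  have hsq (b : ℤ√2) (hb : c ^ 2 = zsqrtdTwoEmbedding b ^ 2) : c ∈ zsqrtdTwoEmbedding.range := by
    rcases sq_eq_sq_iff_eq_or_eq_neg.1 hb with rfl | rfl
    exacts [⟨b, rfl⟩, ⟨-b, map_neg _ _⟩]
  rcases h with h | h | h | h
  · exact hsq 2 (by rw [h, map_ofNat]; norm_num)
  · exact hsq 0 (by rw [h, map_zero]; norm_num)
  · exact hsq 1 (by rw [h, map_one]; norm_num)
  · exact hsq Zsqrtd.sqrtd (by rw [h]; simp [zsqrtdTwoEmbedding, Zsqrtd.lift])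

theorem IsCrystallographic.inner_sq_eq (hcr : D.IsCrystallographic C) (hC : D.IsComponent C)
    (hcard : 2 < C.ncard) (hx : D.IsRoot C x) (hy : D.IsRoot C y) :
    ⟪x, y⟫ ^ 2 = 4 ∨ ⟪x, y⟫ ^ 2 = 0 ∨ ⟪x, y⟫ ^ 2 = 1 ∨ ⟪x, y⟫ ^ 2 = 2 := by
  have hmem : ⟪x, y⟫ ∈ zsqrtdTwoEmbedding.range := by
    refine inner_mem_subring hC (fun t ht u hu => mem_range_zsqrtdTwoEmbedding ?_) hx hy
    have h := hcr t ht u hu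
    have := CoxeterRootSystem.inner_sq_eq hC hcard (isRoot_simpleRoot ht) (isRoot_simpleRoot hu)
    tauto
  obtain ⟨a, ha⟩ := hmem
  have h := not_isGolden_zsqrtdTwoEmbedding a
  have := CoxeterRootSystem.inner_sq_eq hC hcard hx hy
  rw [ha] at h
  tauto

end Crystallographic

section Subfield

theorem mem_of_two_mul_mem {K : Subfield ℝ} {a : ℝ} (h : 2 * a ∈ K) : a ∈ K := by
  have := K.div_mem h (ofNat_mem K 2)
  rwa [mul_div_cancel_left₀ a two_ne_zero] at this

theorem mul_mem_of_sq_mem {K : Subfield ℝ} {a b d : ℝ} (hd : d ≠ 0) (hsq : d ^ 2 ∈ K)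
    (ha : a * d ∈ K) (hb : d * b ∈ K) : a * b ∈ K := by
  have := K.div_mem (K.mul_mem ha hb) hsq
  rwa [show a * d * (d * b) / d ^ 2 = a * b by field_simp] at this

variable {D} {C : Set D.W} {x y z u : V} (hC : D.IsComponent C) {K : Subfield ℝ}
  (hK : ∀ x y, D.IsRoot C x → D.IsRoot C y → ⟪x, y⟫ ^ 2 ∈ K)
include hC hK

theorem inner_triangle_mem (hx : D.IsRoot C x) (hy : D.IsRoot C y) (hz : D.IsRoot C z) :
    ⟪x, y⟫ * ⟪y, z⟫ * ⟪z, x⟫ ∈ K := by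
  have h := hK _ _ hx (hy.reflect hC hz)
  rw [inner_sub_right, inner_smul_right] at h
  refine mem_of_two_mul_mem ?_
  have := K.sub_mem (K.add_mem (hK _ _ hz hx) (K.mul_mem (hK _ _ hx hy) (hK _ _ hy hz))) h
  convert this using 1
  rw [real_inner_comm x z]
  ring

theorem inner_square_mem (hx : D.IsRoot C x) (hy : D.IsRoot C y) (hz : D.IsRoot C z)
    (hu : D.IsRoot C u) : ⟪x, y⟫ * ⟪y, z⟫ * ⟪z, u⟫ * ⟪u, x⟫ ∈ K := by
  -- each two of the three closed walks through four given roots have their sum in `K`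
  have hsum {x y z u : V} (hx : D.IsRoot C x) (hy : D.IsRoot C y) (hz : D.IsRoot C z)
      (hu : D.IsRoot C u) : ⟪x, y⟫ * ⟪y, z⟫ * ⟪z, u⟫ * ⟪u, x⟫ +
        ⟪y, x⟫ * ⟪x, z⟫ * ⟪z, u⟫ * ⟪u, y⟫ ∈ K := by
    have h := inner_triangle_mem hC hK (hy.reflect hC hx) hz hu
    have hxzu := inner_triangle_mem hC hK hx hz hu
    have hyzu := K.mul_mem (hK _ _ hx hy) (inner_triangle_mem hC hK hy hz hu)
    have := K.sub_mem (K.add_mem hxzu hyzu) h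
    convert this using 1
    simp only [inner_sub_left, inner_sub_right, inner_smul_left, inner_smul_right, conj_trivial,
      real_inner_comm x y]
    ring
  refine mem_of_two_mul_mem ?_
  have := K.sub_mem (K.add_mem (hsum hx hy hz hu) (hsum hy hz hu hx)) (hsum hx hz hy hu)
  convert this using 1
  simp only [real_inner_comm x, real_inner_comm y z, real_inner_comm y u, real_inner_comm z u]
  ring

theorem exists_root_mem (hx : D.IsRoot C x) (hy : D.IsRoot C y) (hxy : ⟪x, y⟫ ≠ 0) (g : D.W) :
    ∃ z, D.IsRoot C z ∧ ⟪x, z⟫ * ⟪z, D.ρ g y⟫ ≠ 0 ∧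
      ⟪x, y⟫ * (⟪x, z⟫ * ⟪z, D.ρ g y⟫) ∈ K := by
  induction g using word_induction with
  | one =>
    refine ⟨x, hx, ?_, ?_⟩ <;> rw [ρ_one, hx.inner_self hC]
    · exact mul_ne_zero two_ne_zero hxy
    · rw [mul_left_comm, ← sq]
      exact K.mul_mem (ofNat_mem K 2) (hK _ _ hx hy)
  | simple_mul u hu g ih =>
    obtain ⟨z, hz, hne, hmem⟩ := ih
    have hgy := hy.map_ρ g
    by_cases huy : ⟪D.simpleRoot u, D.ρ g y⟫ = 0
    · exact ⟨z, hz, by rwa [ρ_mul, ρ_eq_self_of_inner_eq_zero hu huy], by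
        rwa [ρ_mul, ρ_eq_self_of_inner_eq_zero hu huy]⟩
    by_cases hux : ⟪D.simpleRoot u, x⟫ = 0
    · have hxz : ⟪x, D.ρ u z⟫ = ⟪x, z⟫ := by
        rw [← inner_ρ_ρ u x z, ρ_eq_self_of_inner_eq_zero hu hux]
      exact ⟨D.ρ u z, hz.map_ρ u, by rwa [ρ_mul, inner_ρ_ρ, hxz], by
        rwa [ρ_mul, inner_ρ_ρ, hxz]⟩
    have huC : u ∈ C := by
      by_contra huC
      obtain ⟨w, t, ht, h⟩ := hgy
      exact huy (h ▸ inner_ρ_simpleRoot_of_notMem hC hu huC ht w)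
    have hroot := isRoot_simpleRoot huC
    have hu_ρ : ⟪D.simpleRoot u, D.ρ (u * g) y⟫ = -⟪D.simpleRoot u, D.ρ g y⟫ := by
      rw [ρ_mul, ρ_simple hu, inner_sub_right, inner_smul_right, hroot.inner_self hC]
      ring
    rw [real_inner_comm] at hux
    refine ⟨_, hroot, hu_ρ ▸ mul_ne_zero hux (neg_ne_zero.2 huy), ?_⟩
    refine mul_mem_of_sq_mem hne ?_ hmem ?_
    · rw [mul_pow]
      exact K.mul_mem (hK _ _ hx hz) (hK _ _ hz hgy)
    · have := K.neg_mem (inner_square_mem hC hK hx hz hgy hroot)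
      convert this using 1
      rw [hu_ρ, real_inner_comm x, real_inner_comm _ (D.ρ g y)]
      ring

theorem inner_mul_inner_mem (hx : D.IsRoot C x) (hy : D.IsRoot C y) (g : D.W) :
    ⟪x, y⟫ * ⟪x, D.ρ g y⟫ ∈ K := by
  by_cases hxy : ⟪x, y⟫ = 0
  · rw [hxy, zero_mul]
    exact K.zero_mem
  obtain ⟨z, hz, hne, hmem⟩ := exists_root_mem hC hK hx hy hxy g
  have hgy := hy.map_ρ g
  refine mul_mem_of_sq_mem hne ?_ hmem ?_
  · rw [mul_pow]
    exact K.mul_mem (hK _ _ hx hz) (hK _ _ hz hgy)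
  · rw [real_inner_comm (D.ρ g y) x]
    exact inner_triangle_mem hC hK hx hz hgy

end Subfield

section Transitivity

theorem sq_ne_two_of_mem_range {p : ℝ} (hp : p ∈ (Rat.castHom ℝ).fieldRange) : p ^ 2 ≠ 2 := by
  obtain ⟨q, rfl⟩ := hp
  intro h
  refine irrational_sqrt_two ⟨|q|, ?_⟩
  rw [Rat.cast_abs, ← Real.sqrt_sq_eq_abs, ← Rat.coe_castHom, h]

variable {D} {C : Set D.W} {x y : V} {s t u : D.W} {l : List D.W}

section

variable (hC : D.IsComponent C) (hcard : 2 < C.ncard) (hcr : D.IsCrystallographic C)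
include hC hcard hcr

theorem IsCrystallographic.inner_mul_inner_mem (hx : D.IsRoot C x) (hy : D.IsRoot C y) (g : D.W) :
    ⟪x, y⟫ * ⟪x, D.ρ g y⟫ ∈ (Rat.castHom ℝ).fieldRange := by
  refine CoxeterRootSystem.inner_mul_inner_mem hC (fun x y hx hy => ?_) hx hy g
  rcases hcr.inner_sq_eq hC hcard hx hy with h | h | h | h <;> rw [h]
  exacts [ofNat_mem _ 4, zero_mem _, one_mem _, ofNat_mem _ 2]

theorem IsCrystallographic.inner_sq_ne_two (hx : D.IsRoot C x) (hy : D.IsRoot C y) (g : D.W)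
    (h : ⟪x, y⟫ ^ 2 = 1) : ⟪x, D.ρ g y⟫ ^ 2 ≠ 2 := by
  have := sq_ne_two_of_mem_range (hcr.inner_mul_inner_mem hC hcard hx hy g)
  rwa [mul_pow, h, one_mul] at this

theorem IsCrystallographic.inner_orbit_eq (hx : D.IsRoot C x) (g : D.W) :
    ⟪x, D.ρ g x⟫ = 2 ∨ ⟪x, D.ρ g x⟫ = 1 ∨ ⟪x, D.ρ g x⟫ = 0 ∨ ⟪x, D.ρ g x⟫ = -1 ∨
      ⟪x, D.ρ g x⟫ = -2 := by
  have hmem := hcr.inner_mul_inner_mem hC hcard hx hx g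
  rw [hx.inner_self hC] at hmem
  have hne := sq_ne_two_of_mem_range (mem_of_two_mul_mem hmem)
  rcases hcr.inner_sq_eq hC hcard hx (hx.map_ρ g) with h | h | h | h
  · rw [show (4 : ℝ) = 2 ^ 2 by norm_num, sq_eq_sq_iff_eq_or_eq_neg] at h
    tauto
  · exact .inr (.inr (.inl (pow_eq_zero_iff two_ne_zero |>.1 h)))
  · have := sq_eq_one_iff.1 h
    tauto
  · exact absurd h hne

end

section

variable (hC : D.IsComponent C)
include hC

theorem sameSign_congr_of_inner_eq_two_or_one (ht : t ∈ C) (hs : s ∈ C) {w w' : D.W}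
    (h : ⟪D.simpleRoot t, D.ρ w (D.simpleRoot s)⟫ = ⟪D.simpleRoot t, D.ρ w' (D.simpleRoot s)⟫)
    (he : ⟪D.ρ w (D.simpleRoot s), D.ρ w' (D.simpleRoot s)⟫ = 2 ∨
      ⟪D.ρ w (D.simpleRoot s), D.ρ w' (D.simpleRoot s)⟫ = 1) :
    D.SameSign t w s ↔ D.SameSign t w' s := by
  have hy := isRoot_ρ_simpleRoot w hs
  have hy' := isRoot_ρ_simpleRoot w' hs
  rcases he with he | he
  · exact sameSign_congr (hC.subset hs)
      (.inl (eq_of_inner_eq_two (hy.inner_self hC) (hy'.inner_self hC) he))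
  -- `y - y'` is a root orthogonal to `a_t`, and its reflection maps `y` to `y'`
  have hroot := hy'.reflect hC hy
  rw [real_inner_comm, he, one_smul] at hroot
  obtain ⟨g, hg⟩ := hroot.exists_reflection hC
  refine sameSign_congr_of_ρ (hC.subset ht) (hC.subset hs) (g := g) (.inl ?_) (.inl ?_)
  · rw [hg, real_inner_comm, inner_sub_right, h, sub_self, zero_smul, sub_zero]
  · rw [hg, inner_sub_left, hy.inner_self hC, real_inner_comm, he]
    module

end

section

variable (hC : D.IsComponent C) (hcard : 2 < C.ncard) (hcr : D.IsCrystallographic C)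
include hC hcard hcr

theorem IsCrystallographic.sameSign_congr_of_inner_eq (ht : t ∈ C) (hs : s ∈ C) {w w' : D.W}
    (h : ⟪D.simpleRoot t, D.ρ w (D.simpleRoot s)⟫ = ⟪D.simpleRoot t, D.ρ w' (D.simpleRoot s)⟫)
    (hk : ⟪D.simpleRoot t, D.ρ w (D.simpleRoot s)⟫ ^ 2 = 1 ∨
      ⟪D.simpleRoot t, D.ρ w (D.simpleRoot s)⟫ ^ 2 = 2) :
    D.SameSign t w s ↔ D.SameSign t w' s := by
  have hs' := hC.subset hs
  have ht' := hC.subset ht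
  have horbit (w' : D.W) := hcr.inner_orbit_eq hC hcard (isRoot_ρ_simpleRoot w hs) (w' * w⁻¹)
  simp only [← ρ_mul, inv_mul_cancel_right] at horbit
  by_cases he : ⟪D.ρ w (D.simpleRoot s), D.ρ w' (D.simpleRoot s)⟫ = 2 ∨
    ⟪D.ρ w (D.simpleRoot s), D.ρ w' (D.simpleRoot s)⟫ = 1
  · exact sameSign_congr_of_inner_eq_two_or_one hC ht hs h he
  -- otherwise replace `y'` by `-t y'`
  have hneg : D.ρ (t * w' * s) (D.simpleRoot s) = -D.ρ (t * w') (D.simpleRoot s) := by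
    rw [ρ_mul, ρ_simpleRoot_self hs', map_neg]
  have hsame : D.SameSign t (t * w' * s) s ↔ D.SameSign t w' s := by
    rw [sameSign_congr hs' (.inr hneg), SameSign, SameSign, simple_mul_simple_mul ht']
    exact Iff.comm
  have hval := hneg
  rw [ρ_mul t, ρ_simple ht', ← h] at hval
  have h' := horbit (t * w' * s)
  rw [← hsame]
  refine sameSign_congr_of_inner_eq_two_or_one hC ht hs ?_ ?_
  · rw [hval, inner_neg_right, inner_sub_right, inner_smul_right, inner_simpleRoot_self ht', ← h]
    ring
  · rw [hval, inner_neg_right, inner_sub_right, inner_smul_right,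
      real_inner_comm (D.simpleRoot t), ← sq] at h' ⊢
    have := horbit w'
    rcases hk with hk | hk <;> rw [hk] at h' ⊢ <;> grind

theorem IsCrystallographic.sameSign_congr_of_inner_sq_eq (ht : t ∈ C) (hs : s ∈ C) {w w' : D.W}
    (h : ⟪D.simpleRoot t, D.ρ w (D.simpleRoot s)⟫ ^ 2 =
      ⟪D.simpleRoot t, D.ρ w' (D.simpleRoot s)⟫ ^ 2)
    (hk : ⟪D.simpleRoot t, D.ρ w (D.simpleRoot s)⟫ ^ 2 = 1 ∨
      ⟪D.simpleRoot t, D.ρ w (D.simpleRoot s)⟫ ^ 2 = 2) :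
    D.SameSign t w s ↔ D.SameSign t w' s := by
  rcases sq_eq_sq_iff_eq_or_eq_neg.1 h with h | h
  · exact hcr.sameSign_congr_of_inner_eq hC hcard ht hs h hk
  have hneg : D.ρ (w' * s) (D.simpleRoot s) = -D.ρ w' (D.simpleRoot s) := by
    rw [ρ_mul, ρ_simpleRoot_self (hC.subset hs), map_neg]
  rw [← sameSign_congr (hC.subset hs) (.inr hneg)]
  refine hcr.sameSign_congr_of_inner_eq hC hcard ht hs ?_ hk
  rw [hneg, inner_neg_right, h]

end

variable (D) in
/-- A word from `t` to `s` with distinct letters whose middle part sends `α s` to a root not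
orthogonal to `α t`. The last condition is imposed on all suffixes, so that a linking word can be
cut at any of its letters. -/
def IsLinkingWord (t : D.W) (l : List D.W) (s : D.W) : Prop :=
  D.IsWord (t :: l ++ [s]) ∧ (t :: l ++ [s]).Nodup ∧
    ∀ b m, b :: m <:+ t :: l → ⟪D.simpleRoot b, D.ρ m.prod (D.simpleRoot s)⟫ ≠ 0

namespace IsLinkingWord

theorem inner_ne_zero (h : D.IsLinkingWord t l s) :
    ⟪D.simpleRoot t, D.ρ l.prod (D.simpleRoot s)⟫ ≠ 0 :=
  h.2.2 t l List.suffix_rfl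

theorem exists_of_mem (h : D.IsLinkingWord t l s) (hu : u ∈ t :: l) :
    ∃ l', D.IsLinkingWord u l' s := by
  obtain ⟨hword, hnodup, hsuff⟩ := h
  obtain ⟨l₁, l₂, hl⟩ := List.append_of_mem hu
  rw [hl, List.append_assoc] at hword hnodup
  exact ⟨l₂, hword.right, hnodup.of_append_right, fun b m hm =>
    hsuff b m (hl ▸ hm.trans (List.suffix_append _ _))⟩

theorem cons (h : D.IsLinkingWord t l s) (hu : u ∈ D.S) (hmem : u ∉ t :: l ++ [s])
    (htu : ⟪D.simpleRoot t, D.simpleRoot u⟫ ≠ 0)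
    (h0 : ⟪D.simpleRoot u, D.ρ l.prod (D.simpleRoot s)⟫ = 0) :
    D.IsLinkingWord u (t :: l) s := by
  refine ⟨isWord_cons.2 ⟨hu, h.1⟩, List.nodup_cons.2 ⟨hmem, h.2.1⟩, fun b m hm => ?_⟩
  rcases List.suffix_cons_iff.1 hm with hbm | hbm
  · obtain ⟨rfl, rfl⟩ := List.cons.inj hbm
    rw [List.prod_cons, ρ_mul, ρ_simple (h.1 t List.mem_cons_self), inner_sub_right,
      inner_smul_right, h0, zero_sub, neg_ne_zero,
      real_inner_comm (D.simpleRoot t)]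
    exact mul_ne_zero h.inner_ne_zero htu
  · exact h.2.2 b m hbm

theorem replace_head (h : D.IsLinkingWord t l s) (hu : u ∈ D.S) (hmem : u ∉ t :: l ++ [s])
    (h0 : ⟪D.simpleRoot u, D.ρ l.prod (D.simpleRoot s)⟫ ≠ 0) : D.IsLinkingWord u l s := by
  have hsub : (l ++ [s]).Sublist (t :: l ++ [s]) := List.sublist_cons_self t _
  refine ⟨isWord_cons.2 ⟨hu, h.1.sublist hsub⟩,
    List.nodup_cons.2 ⟨fun hu => hmem (hsub.subset hu), h.2.1.sublist hsub⟩, fun b m hm => ?_⟩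
  rcases List.suffix_cons_iff.1 hm with hbm | hbm
  · obtain ⟨rfl, rfl⟩ := List.cons.inj hbm
    exact h0
  · exact h.2.2 b m (hbm.trans (List.suffix_cons t l))

theorem exists_of_inner_ne_zero (h : D.IsLinkingWord t l s) (hu : u ∈ D.S) (hus : u ≠ s)
    (htu : ⟪D.simpleRoot t, D.simpleRoot u⟫ ≠ 0) : ∃ l', D.IsLinkingWord u l' s := by
  by_cases hmem : u ∈ t :: l
  · exact h.exists_of_mem hmem
  have hnotMem : u ∉ t :: l ++ [s] := by simpa [hus] using hmem
  by_cases h0 : ⟪D.simpleRoot u, D.ρ l.prod (D.simpleRoot s)⟫ = 0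
  · exact ⟨t :: l, h.cons hu hnotMem htu h0⟩
  · exact ⟨l, h.replace_head hu hnotMem h0⟩

end IsLinkingWord

theorem isLinkingWord_nil (ht : t ∈ D.S) (hs : s ∈ D.S) (hts : t ≠ s)
    (h : ⟪D.simpleRoot t, D.simpleRoot s⟫ ≠ 0) : D.IsLinkingWord t [] s := by
  refine ⟨by simp [IsWord, ht, hs], by simpa using hts, fun b m hm => ?_⟩
  obtain ⟨rfl, rfl⟩ : b = t ∧ m = [] := by simpa [List.suffix_cons_iff] using hm
  rwa [List.prod_nil, ρ_one]

theorem IsComponent.exists_isLinkingWord (hC : D.IsComponent C) (hs : s ∈ C) (ht : t ∈ C)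
    (hts : t ≠ s) : ∃ l, D.IsLinkingWord t l s := by
  have key : ∀ t ∈ C, t = s ∨ ∃ l, D.IsLinkingWord t l s := by
    refine hC.induction _ ⟨s, hs, .inl rfl⟩ fun t _ u hu htu h =>
      or_iff_not_imp_left.2 fun hus => ?_
    rcases h with rfl | ⟨l, hl⟩
    · exact ⟨[], isLinkingWord_nil (hC.subset hu) (hC.subset hs) hus
        (by rwa [real_inner_comm])⟩
    · exact hl.exists_of_inner_ne_zero (hC.subset hu) hus htu
  exact (key t ht).resolve_left hts

theorem eq_or_eq_neg_of_inner_sq_eq_four (hx : ⟪x, x⟫ = 2) (hy : ⟪y, y⟫ = 2)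
    (h : ⟪x, y⟫ ^ 2 = 4) : y = x ∨ y = -x := by
  rw [show (4 : ℝ) = 2 ^ 2 by norm_num, sq_eq_sq_iff_eq_or_eq_neg] at h
  rcases h with h | h
  · exact .inl (eq_of_inner_eq_two hx hy h).symm
  · rw [neg_eq_iff_eq_neg.symm]
    exact .inr (eq_of_inner_eq_two hx (by rw [inner_neg_neg, hy])
      (by rw [inner_neg_right, h, neg_neg])).symm

theorem inner_sq_ne_four_of_notMem (ht : t ∈ D.S) (hs : s ∈ D.S) (hts : t ≠ s) {l : List D.W}
    (hl : D.IsWord l) (htl : t ∉ l) : ⟪D.simpleRoot t, D.ρ l.prod (D.simpleRoot s)⟫ ^ 2 ≠ 4 := by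
  intro h
  have hcoord := coord_ρ_of_notMem ht hl htl (D.simpleRoot s)
  rw [coord_simpleRoot_of_ne ht hs hts] at hcoord
  rcases eq_or_eq_neg_of_inner_sq_eq_four (inner_simpleRoot_self ht)
    (inner_ρ_simpleRoot_self hs l.prod) h with h | h <;>
  simp [h, coord_simpleRoot_self ht] at hcoord

theorem isReduced_of_inner_sq_eq_one (ht : t ∈ D.S) (hu : u ∈ D.S) (htu : t ≠ u)
    (h : ⟪D.simpleRoot t, D.simpleRoot u⟫ ^ 2 = 1) : D.IsReduced [t, u, t] := by
  have hword : D.IsWord [t, u, t] := by simp [IsWord, ht, hu]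
  refine ⟨hword, ?_⟩
  by_contra hlen
  obtain ⟨l, hl, hllen, hlprod⟩ := D.exists_reduced_word [t, u, t].prod
  have hmem : u ∈ l := InSupport.mem hu hl (hlprod ▸ inSupport_of_count_eq_one hu hword
    (by simp [htu, htu.symm]))
  have hlone : l.length = 1 := by
    have := hword.len_prod_le
    have := hword.len_prod_mod_two
    have := List.length_pos_of_mem hmem
    rw [List.length_cons, List.length_cons, List.length_singleton] at *
    omega
  obtain ⟨a, rfl⟩ := List.length_eq_one_iff.1 hlone
  obtain rfl := List.mem_singleton.1 hmem
  -- `t u t` maps `a_u` to a multiple of `a_t`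
  have hact := congrArg (D.coord u) (congrArg (D.ρ · (D.simpleRoot u)) hlprod)
  have hprod : [t, u, t].prod = t * (u * t) := by simp
  simp only [hprod, List.prod_singleton, ρ_mul, ρ_simpleRoot_self hu, ρ_simple ht, ρ_simple hu,
    map_sub, map_neg, map_smul, inner_sub_right, inner_smul_right, inner_simpleRoot_self ht,
    inner_simpleRoot_self hu, coord_simpleRoot_self hu, coord_simpleRoot_of_ne hu ht htu.symm,
    smul_eq_mul, real_inner_comm (D.simpleRoot t) (D.simpleRoot u)] at hact
  nlinarith

section

variable (hC : D.IsComponent C) (hcard : 2 < C.ncard) (hcr : D.IsCrystallographic C)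
include hC hcard hcr

theorem IsCrystallographic.inner_orbit_eq_zero_or_two (ht : t ∈ C)
    (h : ∀ u ∈ C, ⟪D.simpleRoot u, D.simpleRoot t⟫ ^ 2 ≠ 1) (g : D.W) :
    ⟪D.simpleRoot t, D.ρ g (D.simpleRoot t)⟫ = 0 ∨
      ⟪D.simpleRoot t, D.ρ g (D.simpleRoot t)⟫ ^ 2 = 4 := by
  have ht' := hC.subset ht
  induction g using word_induction with
  | one => right; rw [ρ_one, inner_simpleRoot_self ht']; norm_num
  | simple_mul u hu w ih =>
    have hval : ⟪D.simpleRoot t, D.ρ (u * w) (D.simpleRoot t)⟫ =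
        ⟪D.simpleRoot t, D.ρ w (D.simpleRoot t)⟫ -
          ⟪D.simpleRoot u, D.simpleRoot t⟫ * ⟪D.simpleRoot u, D.ρ w (D.simpleRoot t)⟫ := by
      rw [ρ_mul, ρ_simple hu, inner_sub_right, inner_smul_right,
        real_inner_comm (D.simpleRoot u) (D.simpleRoot t), mul_comm]
    have horbit := hcr.inner_orbit_eq hC hcard (isRoot_simpleRoot ht) (u * w)
    rw [hval] at horbit ⊢
    by_cases huC : u ∈ C
    · by_cases hut : u = t
      · subst hut
        rw [inner_simpleRoot_self hu]
        grind
      have hroot := isRoot_simpleRoot huC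
      have hmem := hcr.inner_mul_inner_mem hC hcard hroot (isRoot_simpleRoot ht) w
      set q := ⟪D.simpleRoot u, D.simpleRoot t⟫ * ⟪D.simpleRoot u, D.ρ w (D.simpleRoot t)⟫ with hq
      have hq₂ : q ^ 2 ≠ 2 := sq_ne_two_of_mem_range hmem
      have hq₈ : q ^ 2 ≠ 8 := fun hq =>
        sq_ne_two_of_mem_range (Subfield.div_mem _ hmem (ofNat_mem _ 2))
          (by rw [div_pow, hq]; norm_num)
      have hne := inner_sq_ne_four_of_notMem hu ht' hut (l := []) (by simp [IsWord]) (by simp)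
      rw [List.prod_nil, ρ_one] at hne
      have hut := hcr.inner_sq_eq hC hcard hroot (isRoot_simpleRoot ht)
      have huw := hcr.inner_sq_eq hC hcard hroot (isRoot_ρ_simpleRoot w ht)
      have hone := h u huC
      have hqsq := congrArg (· ^ 2) hq
      simp only [mul_pow] at hqsq
      have hq₄ : q = 0 ∨ q ^ 2 = 4 := by grind
      grind
    · rwa [inner_ρ_simpleRoot_of_notMem hC hu huC ht, mul_zero, sub_zero]

theorem IsCrystallographic.exists_sameSign (ht : t ∈ C) (hs : s ∈ C) {w : D.W}
    (hw : ⟪D.simpleRoot t, D.ρ w (D.simpleRoot s)⟫ ^ 2 = 1 ∨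
      ⟪D.simpleRoot t, D.ρ w (D.simpleRoot s)⟫ ^ 2 = 2) :
    ∃ g, D.SameSign t g s ∧ (⟪D.simpleRoot t, D.ρ g (D.simpleRoot s)⟫ ^ 2 = 1 ∨
      ⟪D.simpleRoot t, D.ρ g (D.simpleRoot s)⟫ ^ 2 = 2) := by
  have ht' := hC.subset ht
  by_cases hts : t = s
  · subst hts
    obtain ⟨u, hu, hone⟩ : ∃ u ∈ C, ⟪D.simpleRoot u, D.simpleRoot t⟫ ^ 2 = 1 := by
      by_contra! h
      have h₁ := hcr.inner_orbit_eq_zero_or_two hC hcard ht h w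
      have h₂ := hcr.inner_orbit_eq hC hcard (isRoot_simpleRoot ht) w
      grind
    have hu' := hC.subset hu
    have htu : t ≠ u := by
      rintro rfl
      rw [inner_simpleRoot_self ht'] at hone
      norm_num at hone
    have hred := isReduced_of_inner_sq_eq_one ht' hu' htu (by rwa [real_inner_comm])
    refine ⟨u, by simpa using hred.sameSign (l := [u]), .inl ?_⟩
    rw [ρ_simple hu', inner_sub_right, inner_smul_right, inner_simpleRoot_self ht',
      real_inner_comm (D.simpleRoot u) (D.simpleRoot t), ← sq, hone]
    norm_num
  · obtain ⟨l, hl⟩ := hC.exists_isLinkingWord hs ht hts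
    refine ⟨l.prod, (isReduced_of_nodup hl.1 hl.2.1).sameSign, ?_⟩
    have hfour := inner_sq_ne_four_of_notMem ht' (hC.subset hs) hts (l := l)
      (hl.1.sublist (by simp)) (by grind [hl.2.1])
    have := hcr.inner_sq_eq hC hcard (isRoot_simpleRoot ht) (isRoot_ρ_simpleRoot l.prod hs)
    grind [hl.inner_ne_zero]

theorem hasSeparator_of_isCrystallographic (hs : s ∈ C) : D.HasSeparator s := by
  refine hasSeparator_of_component hC hs fun t ht w => ?_
  have ht' := hC.subset ht
  have hx := isRoot_simpleRoot ht
  have hs' := hC.subset hs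
  rcases hcr.inner_sq_eq hC hcard hx (isRoot_ρ_simpleRoot w hs) with h | h | hw
  · exact .inr (mul_eq_mul_of_ρ_simpleRoot ht' hs' (eq_or_eq_neg_of_inner_sq_eq_four
      (inner_simpleRoot_self ht') (inner_ρ_simpleRoot_self hs' w) h))
  · exact .inl (sameSign_of_inner_eq_zero ht' (pow_eq_zero_iff two_ne_zero |>.1 h))
  obtain ⟨g, hsame, hg⟩ := hcr.exists_sameSign hC hcard ht hs hw
  have hgw := hcr.inner_sq_ne_two hC hcard hx (isRoot_ρ_simpleRoot g hs) (w * g⁻¹)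
  have hwg := hcr.inner_sq_ne_two hC hcard hx (isRoot_ρ_simpleRoot w hs) (g * w⁻¹)
  rw [← ρ_mul, inv_mul_cancel_right] at hgw hwg
  have hsq : ⟪D.simpleRoot t, D.ρ g (D.simpleRoot s)⟫ ^ 2 =
      ⟪D.simpleRoot t, D.ρ w (D.simpleRoot s)⟫ ^ 2 := by grind
  exact .inl ((hcr.sameSign_congr_of_inner_sq_eq hC hcard ht hs hsq hg).1 hsame)

end

end Transitivity

end CoxeterRootSystem

/-! ### Golden components -/

namespace CoxeterRootSystem

variable {V : Type} [NormedAddCommGroup V] [InnerProductSpace ℝ V] {D : CoxeterRootSystem V}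

/-- The ring `ℤ[φ]`, where `φ ^ 2 = φ + 1`. Exact arithmetic in this ring makes statements about
Gram matrices and root coordinates decidable. -/
abbrev GoldenInt : Type := QuadraticAlgebra ℤ 1 1

namespace GoldenInt

/-- The golden ratio in `ℤ[φ]`. -/
abbrev φ : GoldenInt := QuadraticAlgebra.omega

theorem injective_of_ringHom {R : Type*} [CommRing R] [CharZero R] (σ : GoldenInt →+* R) :
    Function.Injective σ := by
  refine (injective_iff_map_eq_zero σ).2 fun z hz => ?_
  have hnorm : z.norm = 0 := by
    have := congrArg σ (QuadraticAlgebra.algebraMap_norm_eq_mul_star z)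
    rwa [map_mul, hz, zero_mul, eq_intCast, map_intCast, Int.cast_eq_zero] at this
  have hdisc : (2 * z.re + z.im : ℚ) ^ 2 = 5 * (z.im : ℚ) ^ 2 := by
    rw [QuadraticAlgebra.norm_def] at hnorm
    have : (z.re * z.re + 1 * z.re * z.im - 1 * z.im * z.im : ℚ) = 0 := mod_cast hnorm
    linear_combination 4 * this
  have him : z.im = 0 := by
    by_contra him
    have him' : (z.im : ℚ) ≠ 0 := Int.cast_ne_zero.2 him
    have hsquare : IsSquare (5 : ℚ) :=
      ⟨(2 * z.re + z.im) / z.im, by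
        rw [← sq, div_pow, hdisc, mul_div_cancel_right₀ _ (pow_ne_zero 2 him')]⟩
    norm_num at hsquare
  have hre : z.re = 0 := by simpa [him] using hdisc
  exact QuadraticAlgebra.ext hre him

/-- The possible inner products of two roots, up to sign. -/
def absRootValues : List GoldenInt := [2, 0, 1, φ, 1 - φ]

/-- The possible inner products of two roots. -/
def rootValues : List GoldenInt := absRootValues ++ absRootValues.map (-·)

/-- The possible inner products of two distinct simple roots. -/
def edgeValues : List GoldenInt := [0, 1, -1, φ, -φ, 1 - φ, φ - 1]

theorem isGolden_iff (σ : GoldenInt →+* ℝ) {c : ℝ} :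
    IsGolden c ↔ c ^ 2 = σ φ ^ 2 ∨ c ^ 2 = σ (1 - φ) ^ 2 := by
  have hφ : σ φ ^ 2 = σ φ + 1 := by
    rw [← map_pow, ← map_one σ, ← map_add]
    exact congrArg σ (by decide)
  rw [IsGolden, ← sub_eq_zero (a := c ^ 2), ← sub_eq_zero (b := σ (1 - φ) ^ 2), ← mul_eq_zero,
    map_sub, map_one]
  constructor <;> intro h
  · linear_combination h - (c ^ 2 * 2 - σ φ ^ 2 + σ φ - 1) * hφ
  · linear_combination h + (c ^ 2 * 2 - σ φ ^ 2 + σ φ - 1) * hφ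

theorem exists_ringHom_of_isGolden {c : ℝ} (hc : IsGolden c) :
    ∃ σ : GoldenInt →+* ℝ, σ φ = c ∨ σ φ = -c := by
  obtain ⟨u, hu, hsq⟩ : ∃ u, (u = c ∨ u = -c) ∧ u * u = (1 : ℤ) • 1 + (1 : ℤ) • u := by
    have : (c ^ 2 - c - 1) * (c ^ 2 + c - 1) = 0 := by
      rw [IsGolden] at hc
      linear_combination hc
    rcases mul_eq_zero.1 this with h | h
    · exact ⟨c, .inl rfl, by rw [one_smul, one_smul]; linear_combination h⟩
    · exact ⟨-c, .inr rfl, by rw [one_smul, one_smul]; linear_combination h⟩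
  refine ⟨(QuadraticAlgebra.lift ⟨u, hsq⟩ : GoldenInt →ₐ[ℤ] ℝ), ?_⟩
  rwa [RingHom.coe_coe, show QuadraticAlgebra.lift ⟨u, hsq⟩ φ = u by simp]

end GoldenInt

open GoldenInt

variable {C : Set D.W} (hC : D.IsComponent C) (hcard : 2 < C.ncard) {x y v : V}
include hC hcard

theorem inner_sq_eq_two_or_exists (σ : GoldenInt →+* ℝ) (hx : D.IsRoot C x) (hy : D.IsRoot C y) :
    ⟪x, y⟫ ^ 2 = 2 ∨ ∃ z ∈ absRootValues, ⟪x, y⟫ ^ 2 = σ z ^ 2 := by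
  simp only [absRootValues, List.exists_mem_cons_iff, List.not_mem_nil, false_and, exists_false,
    or_false, map_ofNat, map_zero, map_one, ← isGolden_iff]
  rcases inner_sq_eq hC hcard hx hy with h | h | h | h | h <;> norm_num [h]

/-- If `⟪x, y⟫` is golden and `⟪y, v⟫ = √2`, reflecting `x` in `y` gives a root whose product with
`v` lies outside `ℚ(√5)` and is not `√2` up to sign. -/
theorem inner_sq_ne_two_of_isGolden (hx : D.IsRoot C x) (hy : D.IsRoot C y) (hv : D.IsRoot C v)
    (hxy : IsGolden ⟪x, y⟫) : ⟪y, v⟫ ^ 2 ≠ 2 := by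
  intro hyv
  obtain ⟨σ, hσ⟩ := exists_ringHom_of_isGolden hxy
  have hsq {w : V} (hw : D.IsRoot C w) : ∃ z ∈ [4, 0, 1, 2, φ ^ 2, (1 - φ) ^ 2],
      ⟪w, v⟫ ^ 2 = σ z := by
    rcases inner_sq_eq_two_or_exists hC hcard σ hw hv with h | ⟨z, hz, h⟩
    · exact ⟨2, by simp, by rw [h, map_ofNat]⟩
    · have hcheck : ∀ z ∈ absRootValues, z ^ 2 ∈ [4, 0, 1, 2, φ ^ 2, (1 - φ) ^ 2] := by decide
      exact ⟨z ^ 2, hcheck z hz, by rw [h, map_pow]⟩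
  obtain ⟨b, hb, hxv⟩ := hsq hx
  obtain ⟨d, hd, hrv⟩ := hsq (hy.reflect hC hx)
  have hφ : ⟪x, y⟫ ^ 2 = σ φ ^ 2 := by rcases hσ with h | h <;> simp only [h, neg_sq]
  have heq : (d - b - 2 * φ ^ 2) ^ 2 = 8 * φ ^ 2 * b := by
    apply injective_of_ringHom σ
    simp only [map_sub, map_mul, map_pow, map_ofNat, ← hxv, ← hrv, ← hφ, inner_sub_left,
      real_inner_smul_left, real_inner_comm x y]
    linear_combination (⟪x, y⟫ ^ 4 * (⟪y, v⟫ ^ 2 - 2) + 4 * ⟪x, v⟫ ^ 2 * ⟪x, y⟫ ^ 2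
      - 4 * ⟪x, y⟫ ^ 3 * ⟪y, v⟫ * ⟪x, v⟫) * hyv
  have hcheck : ∀ b ∈ [4, 0, 1, 2, φ ^ 2, (1 - φ) ^ 2], ∀ d ∈ [4, 0, 1, 2, φ ^ 2, (1 - φ) ^ 2],
      (d - b - 2 * φ ^ 2) ^ 2 ≠ 8 * φ ^ 2 * b := by decide
  exact hcheck b hb d hd heq

omit hcard in
theorem exists_ρ_simpleRoot_eq_or_eq_neg {t u : D.W} (ht : t ∈ C) (hu : u ∈ C)
    (h : ⟪D.simpleRoot t, D.simpleRoot u⟫ ^ 2 = 1) :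
    ∃ g, D.ρ g (D.simpleRoot t) = D.simpleRoot u ∨ D.ρ g (D.simpleRoot t) = -D.simpleRoot u := by
  refine ⟨t * u, ?_⟩
  rw [ρ_mul, ρ_simple (hC.subset hu), map_sub, map_smul, ρ_simpleRoot_self (hC.subset ht),
    ρ_simple (hC.subset ht), real_inner_comm]
  rcases sq_eq_one_iff.1 h with h | h
  · exact .inr (by rw [h]; module)
  · exact .inl (by rw [h]; module)

theorem exists_isGolden_inner {t u : D.W} (ht : t ∈ C) (hu : u ∈ C)
    (htu : IsGolden ⟪D.simpleRoot t, D.simpleRoot u⟫) (hy : D.IsRoot C y) :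
    ∃ x, D.IsRoot C x ∧ IsGolden ⟪x, y⟫ := by
  obtain ⟨w, s, hs, rfl⟩ := hy
  suffices h : ∃ x, D.IsRoot C x ∧ IsGolden ⟪x, D.simpleRoot s⟫ by
    obtain ⟨x, hx, hxs⟩ := h
    exact ⟨_, hx.map_ρ w, by rwa [inner_ρ_ρ]⟩
  refine hC.induction (fun s => ∃ x, D.IsRoot C x ∧ IsGolden ⟪x, D.simpleRoot s⟫)
    ⟨u, hu, _, isRoot_simpleRoot ht, htu⟩ (fun p hp q hq hpq ⟨x, hx, hxp⟩ => ?_) s hs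
  have hcongr {g : D.W} (hg : D.ρ g (D.simpleRoot p) = D.simpleRoot q ∨
      D.ρ g (D.simpleRoot p) = -D.simpleRoot q) : IsGolden ⟪D.ρ g x, D.simpleRoot q⟫ := by
    rcases hg with h | h
    · rwa [← h, inner_ρ_ρ]
    · rwa [← neg_eq_iff_eq_neg.2 h, inner_neg_right, inner_ρ_ρ, IsGolden, neg_sq]
  rcases inner_sq_eq hC hcard (isRoot_simpleRoot hp) (isRoot_simpleRoot hq) with h | h | h | h | h
  · refine ⟨_, hx.map_ρ 1, hcongr ?_⟩
    rw [ρ_one]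
    exact eq_or_eq_neg_of_inner_sq_eq_four (inner_simpleRoot_self (hC.subset hq))
      (inner_simpleRoot_self (hC.subset hp)) (by rwa [real_inner_comm])
  · exact absurd (pow_eq_zero_iff two_ne_zero |>.1 h) hpq
  · obtain ⟨g, hg⟩ := exists_ρ_simpleRoot_eq_or_eq_neg hC hp hq h
    exact ⟨_, hx.map_ρ g, hcongr hg⟩
  · exact absurd h (inner_sq_ne_two_of_isGolden hC hcard hx (isRoot_simpleRoot hp)
      (isRoot_simpleRoot hq) hxp)
  · exact ⟨_, isRoot_simpleRoot hp, h⟩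

theorem exists_inner_eq_of_isGolden (σ : GoldenInt →+* ℝ) {t u : D.W} (ht : t ∈ C) (hu : u ∈ C)
    (htu : IsGolden ⟪D.simpleRoot t, D.simpleRoot u⟫) (hx : D.IsRoot C x) (hy : D.IsRoot C y) :
    ∃ z ∈ rootValues, ⟪x, y⟫ = σ z := by
  obtain ⟨v, hv, hvx⟩ := exists_isGolden_inner hC hcard ht hu htu hx
  obtain ⟨z, hz, hsq⟩ := (inner_sq_eq_two_or_exists hC hcard σ hx hy).resolve_left
    (inner_sq_ne_two_of_isGolden hC hcard hv hx hy hvx)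
  rcases sq_eq_sq_iff_eq_or_eq_neg.1 hsq with h | h
  · exact ⟨z, List.mem_append_left _ hz, h⟩
  · exact ⟨-z, List.mem_append_right _ (List.mem_map_of_mem hz), by rw [h, map_neg]⟩

end CoxeterRootSystem

/-! ### Gram matrices over `ℤ[φ]` -/

namespace CoxeterRootSystem

/-- A matrix over `ℤ[φ]`, thought of as the Gram matrix of roots `x₀, …, xₙ₋₁` with
`⟪xᵢ, xᵢ⟫ = 2`. A vector `v` over `ℤ[φ]` stands for `∑ i, v i • xᵢ`. -/
abbrev GramMatrix (n : ℕ) : Type := Matrix (Fin n) (Fin n) GoldenInt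

namespace GramMatrix

open Matrix GoldenInt

variable {n : ℕ} (G : GramMatrix n)

/-- The reflection in the `i`-th root. -/
def reflect (i : Fin n) (v : Fin n → GoldenInt) : Fin n → GoldenInt :=
  Function.update v i (v i - G i ⬝ᵥ v)

/-- The action of a word on coordinate vectors. -/
def act (l : List (Fin n)) (v : Fin n → GoldenInt) : Fin n → GoldenInt := l.foldr G.reflect v

/-- The images of `v` under all words of length `k` in the letters `F`. -/
def images (F : List (Fin n)) (v : Fin n → GoldenInt) : ℕ → List (Fin n → GoldenInt)
  | 0 => [v]
  | k + 1 => (images F v k).flatMap fun u => F.map fun i => G.reflect i u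

/-- The roots `a₀, a₀ a₁, a₀ a₁ a₂, …` met along a word. For a reduced word of the longest element
these are the positive roots. -/
def inversions : List (Fin n) → List (Fin n → GoldenInt)
  | [] => []
  | i :: l => Pi.single i 1 :: (inversions l).map (G.reflect i)

/-- Adds a root in front of the others, with the products `r` with them. -/
def addVertex (r : Fin n → GoldenInt) : GramMatrix (n + 1) :=
  vecCons (vecCons 2 r) fun i => vecCons (r i) (G i)

/-- The Gram matrix of the simple roots of type `H₂`. -/
def H2 : GramMatrix 2 := !![2, -φ; -φ, 2]

/-- The Gram matrix of the simple roots of type `H₃`. -/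
def H3 : GramMatrix 3 := H2.addVertex ![-1, 0]

/-- The Gram matrix of the simple roots of type `H₄`. -/
def H4 : GramMatrix 4 := H3.addVertex ![-1, 0, 0]

/-- Necessary conditions for `v` to be a root. -/
def IsRootLike (v : Fin n → GoldenInt) : Prop :=
  ∀ i, G i ⬝ᵥ v ∈ rootValues ∧ (G i ⬝ᵥ v = 2 → v = Pi.single i 1) ∧
    (G i ⬝ᵥ v = -2 → v = -Pi.single i 1)

/-- A vector on which distinct short words act differently in the cases below. -/
def testVector (n : ℕ) (i : Fin n) : GoldenInt := 3 ^ i.val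

/-- A decidable sufficient condition for `l` to be reduced: no word shorter by two has the same
action on the test vector. Two halves of the shorter word are compared in the middle, as
there are too many words to list. -/
def ReducedCert (l : List (Fin n)) : Prop :=
  l.length ≤ l.dedup.length + 4 ∧ (∀ i ∈ l, G.act l (testVector n) i ≠ testVector n i) ∧
    ∀ v ∈ G.images l.dedup (testVector n) (l.length - 2 - (l.length - 2) / 2),
      ∀ w ∈ G.images l.dedup (G.act l (testVector n)) ((l.length - 2) / 2), v ≠ w

/-- Two words make the `s`-th root positive, yet send it to opposite vectors. -/
def OppositeCert (l m : List (Fin n)) (s : Fin n) : Prop :=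
  G.act l (Pi.single s 1) = -G.act m (Pi.single s 1) ∧
    G.ReducedCert (l ++ [s]) ∧ G.ReducedCert (m ++ [s])

/-- One of the given witnesses shows that `G` is not the Gram matrix of simple roots up to sign:
either a word in `A` moves a root out of the possible roots, or a pair of words in `B` gives a root
that is both positive and negative. -/
def Refuted (A : List (List (Fin n) × Fin n)) (B : List (List (Fin n) × List (Fin n) × Fin n)) :
    Prop :=
  (∃ p ∈ A, ¬ G.IsRootLike (G.act p.1 (Pi.single p.2 1))) ∨
    ∃ p ∈ B, G.OppositeCert p.1 p.2.1 p.2.2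

instance (A : List (List (Fin n) × Fin n)) (B : List (List (Fin n) × List (Fin n) × Fin n)) :
    Decidable (G.Refuted A B) := by
  unfold Refuted IsRootLike OppositeCert ReducedCert
  infer_instance

/-- `P` behaves like the set of positive roots of the system with Gram matrix `G`. -/
def IsPositiveSystem (P : List (Fin n → GoldenInt)) : Prop :=
  (∀ i, Pi.single i 1 ∈ P) ∧
    ∀ v ∈ P, -v ∉ P ∧ ∀ i, v = Pi.single i 1 ∨ G.reflect i v ∈ P

instance (P : List (Fin n → GoldenInt)) : Decidable (G.IsPositiveSystem P) := by
  unfold IsPositiveSystem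
  infer_instance

variable {G}

theorem reflect_eq_sub (i : Fin n) (v : Fin n → GoldenInt) :
    G.reflect i v = v - Pi.single i (G i ⬝ᵥ v) := by
  ext1 j
  rw [reflect, Pi.sub_apply, Function.update_apply, Pi.single_apply]
  split_ifs with h
  exacts [by rw [h], (sub_zero _).symm]

theorem act_mem_images {F : List (Fin n)} (v : Fin n → GoldenInt) {m : List (Fin n)} (hm : m ⊆ F) :
    G.act m v ∈ G.images F v m.length := by
  induction m with
  | nil => exact List.mem_singleton_self v
  | cons i m ih =>
    rw [List.cons_subset] at hm
    exact List.mem_flatMap.2 ⟨_, ih hm.2, List.mem_map.2 ⟨i, hm.1, rfl⟩⟩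

end GramMatrix
end CoxeterRootSystem

/-! ### Golden frames -/

namespace CoxeterRootSystem

open Matrix GoldenInt

variable {V : Type} [NormedAddCommGroup V] [InnerProductSpace ℝ V] (D : CoxeterRootSystem V)

/-- A component all of whose roots have their inner products in `ℤ[φ]`, read through `σ`. -/
structure IsGoldenComponent (C : Set D.W) (σ : GoldenInt →+* ℝ) : Prop
    extends D.IsComponent C where
  inner_mem : ∀ x y, D.IsRoot C x → D.IsRoot C y → ∃ z ∈ rootValues, ⟪x, y⟫ = σ z

/-- The vectors `x i` are, up to sign, the simple roots of distinct `a i ∈ C`, and have Gram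
matrix `G`. The signs are free so that `G` can be normalized. -/
structure IsGoldenFrame (C : Set D.W) (σ : GoldenInt →+* ℝ) {n : ℕ} (G : GramMatrix n)
    (a : Fin n → D.W) (x : Fin n → V) : Prop where
  mem : ∀ i, a i ∈ C
  injective : Function.Injective a
  eq_or_eq_neg : ∀ i, x i = D.simpleRoot (a i) ∨ x i = -D.simpleRoot (a i)
  inner_eq : ∀ i j, ⟪x i, x j⟫ = σ (G i j)

/-- The vector with coordinates `σ (v i)` in the frame `x`. -/
def frameVector (σ : GoldenInt →+* ℝ) {n : ℕ} (x : Fin n → V) (v : Fin n → GoldenInt) : V :=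
  ∑ i, σ (v i) • x i

variable {D} {C : Set D.W} {σ : GoldenInt →+* ℝ} {n : ℕ} {G : GramMatrix n} {a : Fin n → D.W}
  {x : Fin n → V}

theorem frameVector_single (i : Fin n) (z : GoldenInt) :
    frameVector σ x (Pi.single i z) = σ z • x i := by
  rw [frameVector, Fintype.sum_eq_single i fun j hj => by rw [Pi.single_eq_of_ne hj, map_zero,
    zero_smul], Pi.single_eq_same]

theorem frameVector_single_one (i : Fin n) : frameVector σ x (Pi.single i 1) = x i := by
  rw [frameVector_single, map_one, one_smul]

theorem frameVector_sub (v w : Fin n → GoldenInt) :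
    frameVector σ x (v - w) = frameVector σ x v - frameVector σ x w := by
  simp only [frameVector, Pi.sub_apply, map_sub, sub_smul, Finset.sum_sub_distrib]

theorem frameVector_neg (v : Fin n → GoldenInt) :
    frameVector σ x (-v) = -frameVector σ x v := by
  simp only [frameVector, Pi.neg_apply, map_neg, neg_smul, Finset.sum_neg_distrib]

namespace IsGoldenFrame

section Component

variable (f : D.IsGoldenFrame C σ G a x) (hC : D.IsComponent C)
include f hC

theorem isRoot (i : Fin n) : D.IsRoot C (x i) := by
  rcases f.eq_or_eq_neg i with h | h <;> rw [h]
  exacts [isRoot_simpleRoot (f.mem i), (isRoot_simpleRoot (f.mem i)).neg hC]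

theorem isWord_map (l : List (Fin n)) : D.IsWord (l.map a) := by
  intro t ht
  obtain ⟨i, -, rfl⟩ := List.mem_map.1 ht
  exact hC.subset (f.mem i)

theorem ρ_eq (i : Fin n) (v : V) : D.ρ (a i) v = v - ⟪x i, v⟫ • x i := by
  rw [ρ_simple (hC.subset (f.mem i))]
  rcases f.eq_or_eq_neg i with h | h <;> rw [h]
  rw [inner_neg_left, neg_smul_neg]

omit hC in
theorem inner_frameVector (i : Fin n) (v : Fin n → GoldenInt) :
    ⟪x i, frameVector σ x v⟫ = σ (G i ⬝ᵥ v) := by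
  simp only [frameVector, inner_sum, real_inner_smul_right, f.inner_eq, dotProduct, map_sum,
    map_mul, mul_comm]

theorem frameVector_reflect (i : Fin n) (v : Fin n → GoldenInt) :
    frameVector σ x (G.reflect i v) = D.ρ (a i) (frameVector σ x v) := by
  rw [GramMatrix.reflect_eq_sub, frameVector_sub, frameVector_single, f.ρ_eq hC,
    f.inner_frameVector]

theorem frameVector_act (l : List (Fin n)) (v : Fin n → GoldenInt) :
    frameVector σ x (G.act l v) = D.ρ (l.map a).prod (frameVector σ x v) := by
  induction l with
  | nil => rw [List.map_nil, List.prod_nil, ρ_one, GramMatrix.act, List.foldr_nil]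
  | cons i l ih =>
    rw [List.map_cons, List.prod_cons, ρ_mul, ← ih, ← f.frameVector_reflect hC, GramMatrix.act,
      GramMatrix.act, List.foldr_cons]

theorem coord_frameVector (i : Fin n) (v : Fin n → GoldenInt) :
    D.coord (a i) (frameVector σ x v) = σ (v i) * D.coord (a i) (x i) := by
  rw [frameVector, map_sum, Fintype.sum_eq_single i, map_smul, smul_eq_mul]
  intro j hj
  have hij : D.coord (a i) (D.simpleRoot (a j)) = 0 :=
    coord_simpleRoot_of_ne (hC.subset (f.mem i)) (hC.subset (f.mem j)) (f.injective.ne hj.symm)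
  rcases f.eq_or_eq_neg j with h | h <;> simp [h, hij]

theorem coord_ne_zero (i : Fin n) : D.coord (a i) (x i) ≠ 0 := by
  have := coord_simpleRoot_self (hC.subset (f.mem i))
  rcases f.eq_or_eq_neg i with h | h <;> simp [h, this]

theorem coord_frameVector_inj {i : Fin n} {v w : Fin n → GoldenInt}
    (h : D.coord (a i) (frameVector σ x v) = D.coord (a i) (frameVector σ x w)) : v i = w i := by
  rw [f.coord_frameVector hC, f.coord_frameVector hC] at h
  exact injective_of_ringHom σ (mul_right_cancel₀ (f.coord_ne_zero hC i) h)

theorem frameVector_injective : Function.Injective (frameVector σ x) :=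
  fun _ _ h => funext fun _ => f.coord_frameVector_inj hC (by rw [h])

theorem prod_map_ne_of_reducedCert {l m : List (Fin n)} (hl : G.ReducedCert l)
    (hm : m ⊆ l.dedup) (hlen : m.length + 2 = l.length) : (m.map a).prod ≠ (l.map a).prod := by
  intro hprod
  obtain ⟨-, -, hne⟩ := hl
  obtain ⟨p, q, hp, rfl⟩ : ∃ p q, p.length = (l.length - 2) / 2 ∧ p ++ q = m :=
    ⟨m.take ((l.length - 2) / 2), m.drop _, List.length_take_of_le (by omega),
      List.take_append_drop _ m⟩
  rw [List.length_append] at hlen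
  rw [List.append_subset] at hm
  have hleft := GramMatrix.act_mem_images (G := G) (GramMatrix.testVector n) hm.2
  have hright := GramMatrix.act_mem_images (G := G) (G.act l (GramMatrix.testVector n))
    (List.reverse_subset.2 hm.1)
  rw [show q.length = l.length - 2 - (l.length - 2) / 2 by omega] at hleft
  rw [List.length_reverse, hp] at hright
  refine hne _ hleft _ hright (f.frameVector_injective hC ?_)
  rw [f.frameVector_act hC, f.frameVector_act hC, f.frameVector_act hC, ← hprod, List.map_append,
    List.prod_append, ρ_mul, List.map_reverse, ← (f.isWord_map hC p).inv_prod, ρ_inv_ρ]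

theorem isReduced_of_reducedCert {l : List (Fin n)} (hl : G.ReducedCert l) :
    D.IsReduced (l.map a) := by
  refine isReduced_of_forall_prod_ne (f.isWord_map hC l) (l.nodup_dedup.map f.injective)
    (f.isWord_map hC _) (List.map_subset a l.subset_dedup) (fun t ht => ?_)
    (by simpa using hl.1) fun m hm hlen => ?_
  · obtain ⟨i, hi, rfl⟩ := List.mem_map.1 ht
    refine ⟨frameVector σ x (GramMatrix.testVector n), fun h => ?_⟩
    rw [← f.frameVector_act hC] at h
    exact hl.2.1 i (List.mem_dedup.1 hi) (f.coord_frameVector_inj hC h)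
  · obtain ⟨m, rfl⟩ : ∃ m' : List (Fin n), m'.map a = m := by
      rw [← Set.mem_range, Set.range_list_map]
      exact fun t ht => (List.mem_map.1 (hm ht)).imp fun _ h => h.2
    refine f.prod_map_ne_of_reducedCert hC hl (fun i hi => ?_) (by simpa using hlen)
    simpa [f.injective.eq_iff] using hm (List.mem_map_of_mem hi)

theorem not_oppositeCert {l m : List (Fin n)} {s : Fin n} : ¬ G.OppositeCert l m s := by
  rintro ⟨hopp, hl, hm⟩
  have hsS := hC.subset (f.mem s)
  have hpos {l : List (Fin n)} (hl : G.ReducedCert (l ++ [s])) :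
      D.IsPos (a s) (D.ρ (l.map a).prod (D.simpleRoot (a s))) :=
    IsReduced.isPos (by simpa using f.isReduced_of_reducedCert hC hl)
  have hneg : D.ρ (l.map a).prod (x s) = -D.ρ (m.map a).prod (x s) := by
    simpa only [f.frameVector_act hC, frameVector_neg, frameVector_single_one]
      using congrArg (frameVector σ x) hopp
  refine (isPos_neg hsS _).1 ?_ (hpos hm)
  convert hpos hl using 1
  rcases f.eq_or_eq_neg s with h | h
  · rw [← h, hneg]
  · rw [h, map_neg, map_neg, neg_inj] at hneg
    exact hneg.symm

end Component

section GoldenComponent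

variable (f : D.IsGoldenFrame C σ G a x) (hC : D.IsGoldenComponent C σ)
include f hC

theorem isRootLike {v : Fin n → GoldenInt} (hv : D.IsRoot C (frameVector σ x v)) :
    G.IsRootLike v := by
  have hC' := hC.toIsComponent
  have heq {i : Fin n} {w : Fin n → GoldenInt} (hw : D.IsRoot C (frameVector σ x w))
      (h : G i ⬝ᵥ w = 2) : w = Pi.single i 1 := by
    apply f.frameVector_injective hC'
    rw [frameVector_single_one]
    refine (eq_of_inner_eq_two ((f.isRoot hC' i).inner_self hC') (hw.inner_self hC') ?_).symm
    rw [f.inner_frameVector, h, map_ofNat]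
  refine fun i => ⟨?_, heq hv, fun h => ?_⟩
  · obtain ⟨z, hz, h⟩ := hC.inner_mem _ _ (f.isRoot hC' i) hv
    rw [f.inner_frameVector] at h
    rwa [injective_of_ringHom σ h]
  · rw [← heq (w := -v) (by simpa only [frameVector_neg] using hv.neg hC')
      (by rw [dotProduct_neg, h, neg_neg]), neg_neg]

theorem isRootLike_act (l : List (Fin n)) (s : Fin n) :
    G.IsRootLike (G.act l (Pi.single s 1)) := by
  apply f.isRootLike hC
  rw [f.frameVector_act hC.toIsComponent, frameVector_single_one]
  exact (f.isRoot hC.toIsComponent s).map_ρ _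

theorem not_refuted (A : List (List (Fin n) × Fin n))
    (B : List (List (Fin n) × List (Fin n) × Fin n)) : ¬ G.Refuted A B := by
  rintro (⟨p, -, hp⟩ | ⟨p, -, hp⟩)
  exacts [hp (f.isRootLike_act hC _ _), f.not_oppositeCert hC.toIsComponent hp]

theorem apply_mem_edgeValues {i j : Fin n} (hij : i ≠ j) : G i j ∈ edgeValues := by
  obtain ⟨hmem, htwo, hneg⟩ := f.isRootLike_act hC [] j i
  have hj (h : (Pi.single j 1 : Fin n → GoldenInt) = Pi.single i 1 ∨
      (Pi.single j 1 : Fin n → GoldenInt) = -Pi.single i 1) : False := by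
    rcases h with h | h <;> simpa [hij.symm] using congrFun h j
  simp only [GramMatrix.act, List.foldr_nil, dotProduct_single_one] at hmem htwo hneg
  have hcheck : ∀ z ∈ rootValues, z = 2 ∨ z = -2 ∨ z ∈ edgeValues := by decide
  rcases hcheck _ hmem with h | h | h
  exacts [(hj (.inl (htwo h))).elim, (hj (.inr (hneg h))).elim, h]

end GoldenComponent

end IsGoldenFrame
end CoxeterRootSystem

/-! ### Growing a golden frame to `H₃` or `H₄` -/

namespace CoxeterRootSystem

open Matrix GoldenInt

namespace GramMatrix

/-- Words moving a root out of the possible roots, for the vertices that cannot be added to `H₂`. -/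
def refutersH2 : List (List (Fin 3) × Fin 3) := [([0], 2), ([2], 1), ([1], 2)]

/-- Reduced words with opposite values, for the vertices that cannot be added to `H₂`. -/
def opponentsH2 : List (List (Fin 3) × List (Fin 3) × Fin 3) :=
  [([2, 0, 1, 2], [1, 2, 0, 1, 0], 1), ([2, 1, 2, 1], [0, 1, 2, 0], 2),
    ([2, 1, 2, 1, 0], [0, 2, 1], 2), ([2, 1, 0], [1, 2, 0, 1, 2], 1),
    ([1, 2, 1, 2, 0], [0, 1, 2], 1), ([2, 1, 2, 1], [0, 2, 1, 0], 2),
    ([2, 1, 0, 2, 1], [1, 0, 2, 0], 2), ([2, 1, 0, 2, 1], [1, 2, 0], 2)]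

/-- Words moving a root out of the possible roots, for the vertices that cannot be added to `H₃`. -/
def refutersH3 : List (List (Fin 4) × Fin 4) :=
  [([1], 2), ([1, 2], 3), ([2, 1, 3], 2), ([3, 0, 1, 2], 3), ([0, 1, 3, 2], 3)]

/-- Reduced words with opposite values, for the vertices that cannot be added to `H₃`. -/
def opponentsH3 : List (List (Fin 4) × List (Fin 4) × Fin 4) :=
  [([3, 2, 3, 1, 2], [2, 0, 3, 1, 0], 1), ([3, 2, 3, 1, 0], [0, 3, 1, 2], 3),
    ([2, 1, 0], [0, 1, 2], 1), ([2, 1, 0, 2], [0, 1, 0, 1], 0),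
    ([3, 2, 3, 2, 0, 1, 0], [1, 2, 0, 1, 2, 3, 2], 1)]

/-- Words moving a root out of the possible roots, for the vertices that cannot be added to `H₄`. -/
def refutersH4 : List (List (Fin 5) × Fin 5) :=
  [([1], 2), ([1, 2, 3], 4), ([2, 1, 3, 2, 4], 3), ([2, 1, 3, 2, 0, 1, 2, 4], 3),
    ([2, 3, 4, 3, 2, 1, 4, 3, 2, 4], 3), ([0, 2, 3, 4, 3, 2, 1, 4, 3, 2, 4], 3),
    ([1, 2, 3, 4, 3, 2, 1, 4, 3, 2, 4], 3)]

set_option maxRecDepth 100000 in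
theorem refuted_addVertex_H2 : ∀ p ∈ edgeValues, ∀ q ∈ edgeValues,
    (p = 0 ∧ q ∈ [0, 1, -1]) ∨ (q = 0 ∧ p ∈ [0, 1, -1]) ∨
      (H2.addVertex ![p, q]).Refuted refutersH2 opponentsH2 := by
  decide +kernel

set_option maxRecDepth 100000 in
theorem refuted_addVertex_H3 : ∀ p ∈ edgeValues, ∀ q ∈ edgeValues,
    (p = 0 ∧ q ∈ [0, 1, -1]) ∨ (q = 0 ∧ p ∈ [0, 1, -1]) → ∀ c ∈ edgeValues,
      (p = 0 ∧ q = 0 ∧ c ∈ [0, 1, -1]) ∨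
        (H3.addVertex ![c, p, q]).Refuted refutersH3 opponentsH3 := by
  decide +kernel

set_option maxRecDepth 100000 in
theorem refuted_addVertex_H4 : ∀ c ∈ [0, 1, -1], ∀ b ∈ edgeValues,
    (c = 0 ∧ b = 0) ∨ (H4.addVertex ![b, c, 0, 0]).Refuted refutersH4 [] := by
  decide +kernel

set_option maxRecDepth 100000 in
theorem exists_isPositiveSystem_H3 : ∃ P, H3.IsPositiveSystem P :=
  ⟨H3.inversions (List.replicate 5 [0, 1, 2]).flatten, by decide +kernel⟩

set_option maxRecDepth 100000 in
theorem exists_isPositiveSystem_H4 : ∃ P, H4.IsPositiveSystem P :=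
  ⟨H4.inversions (List.replicate 15 [0, 1, 2, 3]).flatten, by decide +kernel⟩

end GramMatrix

end CoxeterRootSystem

namespace CoxeterRootSystem

open Matrix GoldenInt GramMatrix

variable {V : Type} [NormedAddCommGroup V] [InnerProductSpace ℝ V] {D : CoxeterRootSystem V}
  {C : Set D.W} {σ : GoldenInt →+* ℝ} {n : ℕ} {G : GramMatrix n} {a : Fin n → D.W}
  {x : Fin n → V}

namespace IsGoldenFrame

theorem submatrix (f : D.IsGoldenFrame C σ G a x) {m : ℕ} {e : Fin m → Fin n}
    (he : Function.Injective e) : D.IsGoldenFrame C σ (G.submatrix e e) (a ∘ e) (x ∘ e) where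
  mem i := f.mem (e i)
  injective := f.injective.comp he
  eq_or_eq_neg i := f.eq_or_eq_neg (e i)
  inner_eq i j := f.inner_eq (e i) (e j)

theorem neg_addVertex {r : Fin n → GoldenInt} {a : Fin (n + 1) → D.W} {x : Fin (n + 1) → V}
    (f : D.IsGoldenFrame C σ (G.addVertex r) a x) :
    D.IsGoldenFrame C σ (G.addVertex (-r)) a (vecCons (-vecHead x) (vecTail x)) where
  mem := f.mem
  injective := f.injective
  eq_or_eq_neg i := by
    cases i using Fin.cases with
    | zero => simpa [vecHead, neg_eq_iff_eq_neg, or_comm] using f.eq_or_eq_neg 0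
    | succ i => exact f.eq_or_eq_neg i.succ
  inner_eq i j := by
    have := f.inner_eq i j
    cases i using Fin.cases <;> cases j using Fin.cases <;>
      simpa [addVertex, vecHead, vecTail] using this

variable (f : D.IsGoldenFrame C σ G a x) (hC : D.IsGoldenComponent C σ)
include f hC

theorem exists_addVertex_of_notMem_range {t : D.W} (ht : t ∈ C) (hta : t ∉ Set.range a) :
    ∃ r, D.IsGoldenFrame C σ (G.addVertex r) (vecCons t a) (vecCons (D.simpleRoot t) x) := by
  choose r _ hr using fun i =>
    hC.inner_mem _ _ (isRoot_simpleRoot ht) (f.isRoot hC.toIsComponent i)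
  refine ⟨r, ?_, Fin.cons_injective_iff.2 ⟨hta, f.injective⟩, ?_, ?_⟩
  · exact Fin.cases ht f.mem
  · exact Fin.cases (.inl rfl) f.eq_or_eq_neg
  · intro i j
    have hself : ‖D.simpleRoot t‖ ^ 2 = 2 := by
      rw [← real_inner_self_eq_norm_sq, inner_simpleRoot_self (hC.subset ht)]
    cases i using Fin.cases <;> cases j using Fin.cases <;>
      simp [addVertex, hself, hr, f.inner_eq, real_inner_comm (D.simpleRoot t), map_ofNat σ 2]

theorem exists_addVertex [NeZero n] {t : D.W} (ht : t ∈ C) (hta : t ∉ Set.range a) :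
    ∃ r ≠ 0, ∃ a' x', D.IsGoldenFrame C σ (G.addVertex r) a' x' := by
  by_contra! hno
  refine hta (hC.induction (· ∈ Set.range a) ⟨_, f.mem 0, Set.mem_range_self 0⟩ ?_ t ht)
  rintro _ - u hu hne ⟨i, rfl⟩
  by_contra hua
  obtain ⟨r, g⟩ := f.exists_addVertex_of_notMem_range hC hu hua
  refine hno r (fun hr => hne ?_) _ _ g
  have hx : ⟪D.simpleRoot u, x i⟫ = 0 := by simpa [addVertex, hr] using g.inner_eq 0 i.succ
  rw [real_inner_comm]
  rcases f.eq_or_eq_neg i with h | h <;> simpa [h] using hx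

omit f in
theorem row_mem_edgeValues {r : Fin n → GoldenInt} {a : Fin (n + 1) → D.W}
    {x : Fin (n + 1) → V} (f : D.IsGoldenFrame C σ (G.addVertex r) a x) (i : Fin n) :
    r i ∈ edgeValues := by
  simpa [addVertex] using f.apply_mem_edgeValues hC (Fin.succ_ne_zero i).symm

end IsGoldenFrame

namespace IsGoldenComponent

variable (hC : D.IsGoldenComponent C σ)
include hC

theorem row_H2 {p q : GoldenInt} {a : Fin 3 → D.W} {x : Fin 3 → V}
    (f : D.IsGoldenFrame C σ (H2.addVertex ![p, q]) a x) :
    (p = 0 ∧ q ∈ [0, 1, -1]) ∨ (q = 0 ∧ p ∈ [0, 1, -1]) := by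
  have hmem := f.row_mem_edgeValues hC
  exact (refuted_addVertex_H2 p (hmem 0) q (hmem 1)).imp_right
    fun h => h.resolve_right (f.not_refuted hC _ _)

theorem row_H3 {c p q : GoldenInt} {a : Fin 4 → D.W} {x : Fin 4 → V}
    (f : D.IsGoldenFrame C σ (H3.addVertex ![c, p, q]) a x) :
    p = 0 ∧ q = 0 ∧ c ∈ [0, 1, -1] := by
  have hmem := f.row_mem_edgeValues hC
  have hH2 : (H3.addVertex ![c, p, q]).submatrix ![0, 2, 3] ![0, 2, 3] = H2.addVertex ![p, q] :=
    Matrix.ext fun i j => by fin_cases i <;> fin_cases j <;> rfl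
  have hrow := hC.row_H2 (hH2 ▸ f.submatrix (e := ![0, 2, 3]) (by decide))
  exact (refuted_addVertex_H3 p (hmem 1) q (hmem 2) hrow c (hmem 0)).resolve_right
    (f.not_refuted hC _ _)

theorem row_H4 {b c p q : GoldenInt} {a : Fin 5 → D.W} {x : Fin 5 → V}
    (f : D.IsGoldenFrame C σ (H4.addVertex ![b, c, p, q]) a x) : ![b, c, p, q] = 0 := by
  have hH3 : (H4.addVertex ![b, c, p, q]).submatrix ![0, 2, 3, 4] ![0, 2, 3, 4] =
      H3.addVertex ![c, p, q] :=
    Matrix.ext fun i j => by fin_cases i <;> fin_cases j <;> rfl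
  obtain ⟨rfl, rfl, hc⟩ := hC.row_H3 (hH3 ▸ f.submatrix (e := ![0, 2, 3, 4]) (by decide))
  obtain ⟨rfl, rfl⟩ := (refuted_addVertex_H4 c hc b (f.row_mem_edgeValues hC 0)).resolve_right
    (f.not_refuted hC _ _)
  decide

theorem exists_isGoldenFrame_H3 {a : Fin 2 → D.W} {x : Fin 2 → V} (f : D.IsGoldenFrame C σ H2 a x)
    {t : D.W} (ht : t ∈ C) (hta : t ∉ Set.range a) :
    ∃ a' x', D.IsGoldenFrame C σ H3 a' x' := by
  obtain ⟨r, hr, a', x', g⟩ := f.exists_addVertex hC ht hta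
  obtain ⟨p, q, rfl⟩ : ∃ p q, r = ![p, q] := ⟨_, _, (FinVec.etaExpand_eq r).symm⟩
  have hnormal : ∀ p ∈ edgeValues, ∀ q ∈ edgeValues,
      (p = 0 ∧ q ∈ [0, 1, -1]) ∨ (q = 0 ∧ p ∈ [0, 1, -1]) → ![p, q] ≠ 0 →
        ![p, q] = ![-1, 0] ∨ -![p, q] = ![-1, 0] ∨ ![p, q] = ![0, -1] ∨ -![p, q] = ![0, -1] := by
    decide
  have hswap {a : Fin 3 → D.W} {x : Fin 3 → V}
      (g : D.IsGoldenFrame C σ (H2.addVertex ![0, -1]) a x) :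
      ∃ a' x', D.IsGoldenFrame C σ H3 a' x' :=
    ⟨_, _, (by decide : (H2.addVertex ![0, -1]).submatrix ![0, 2, 1] ![0, 2, 1] = H3) ▸
      g.submatrix (e := ![0, 2, 1]) (by decide)⟩
  have hmem := g.row_mem_edgeValues hC
  rcases hnormal p (hmem 0) q (hmem 1) (hC.row_H2 g) hr with h | h | h | h
  · exact ⟨_, _, h ▸ g⟩
  · exact ⟨_, _, h ▸ g.neg_addVertex⟩
  · exact hswap (h ▸ g)
  · exact hswap (h ▸ g.neg_addVertex)

theorem exists_isGoldenFrame_H4 {a : Fin 3 → D.W} {x : Fin 3 → V} (f : D.IsGoldenFrame C σ H3 a x)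
    {t : D.W} (ht : t ∈ C) (hta : t ∉ Set.range a) :
    ∃ a' x', D.IsGoldenFrame C σ H4 a' x' := by
  obtain ⟨r, hr, a', x', g⟩ := f.exists_addVertex hC ht hta
  obtain ⟨c, p, q, rfl⟩ : ∃ c p q, r = ![c, p, q] := ⟨_, _, _, (FinVec.etaExpand_eq r).symm⟩
  obtain ⟨rfl, rfl, hc⟩ := hC.row_H3 g
  have hnormal : ∀ c ∈ [0, 1, -1], ![c, 0, 0] ≠ (0 : Fin 3 → GoldenInt) →
      ![c, 0, 0] = ![-1, 0, 0] ∨ -![c, 0, 0] = ![-1, 0, 0] := by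
    decide
  rcases hnormal c hc hr with h | h
  · exact ⟨_, _, h ▸ g⟩
  · exact ⟨_, _, h ▸ g.neg_addVertex⟩

theorem mem_range_of_frame_H4 {a : Fin 4 → D.W} {x : Fin 4 → V}
    (f : D.IsGoldenFrame C σ H4 a x) {t : D.W} (ht : t ∈ C) : t ∈ Set.range a := by
  by_contra hta
  obtain ⟨r, hr, a', x', g⟩ := f.exists_addVertex hC ht hta
  obtain ⟨b, c, p, q, rfl⟩ : ∃ b c p q, r = ![b, c, p, q] :=
    ⟨_, _, _, _, (FinVec.etaExpand_eq r).symm⟩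
  exact hr (hC.row_H4 g)

end IsGoldenComponent
end CoxeterRootSystem

/-! ### Separators from positive systems -/

namespace CoxeterRootSystem

open Matrix GoldenInt GramMatrix

variable {V : Type} [NormedAddCommGroup V] [InnerProductSpace ℝ V] {D : CoxeterRootSystem V}
  {C : Set D.W} {s : D.W}

section PositiveSystem

variable (hC : D.IsComponent C) (hs : s ∈ C) {P : Set V}
  (hmem : ∀ t ∈ C, D.simpleRoot t ∈ P ∨ -D.simpleRoot t ∈ P)
  (hstep : ∀ t ∈ C, ∀ y ∈ P, D.ρ t y ∈ P ∨ y = D.simpleRoot t ∨ y = -D.simpleRoot t)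
include hC hs hmem hstep

theorem ρ_simpleRoot_mem_or_neg_mem (g : D.W) :
    D.ρ g (D.simpleRoot s) ∈ P ∨ -D.ρ g (D.simpleRoot s) ∈ P := by
  induction g using word_induction with
  | one => simpa only [ρ_one] using hmem s hs
  | simple_mul t ht w ih =>
    rw [ρ_mul]
    by_cases htC : t ∈ C
    · have hcases (y : V) (hy : y ∈ P) : D.ρ t y ∈ P ∨ -D.ρ t y ∈ P := by
        rcases hstep t htC y hy with h | rfl | rfl
        · exact .inl h
        · rw [ρ_simpleRoot_self ht, neg_neg]
          exact .inr hy
        · rw [map_neg, ρ_simpleRoot_self ht, neg_neg]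
          exact hmem t htC
      rcases ih with h | h
      · exact hcases _ h
      · simpa only [map_neg, neg_neg, or_comm] using hcases _ h
    · rwa [ρ_eq_self_of_inner_eq_zero ht (inner_ρ_simpleRoot_of_notMem hC ht htC hs w)]

omit hmem in
theorem mul_eq_mul_of_ρ_simpleRoot_mem {t g : D.W} (ht : t ∈ D.S)
    (hg : D.ρ g (D.simpleRoot s) ∈ P) (htg : D.ρ (t * g) (D.simpleRoot s) ∉ P) :
    t * g = g * s := by
  rw [ρ_mul] at htg
  by_cases htC : t ∈ C
  · exact mul_eq_mul_of_ρ_simpleRoot ht (hC.subset hs) ((hstep t htC _ hg).resolve_left htg)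
  · rw [ρ_eq_self_of_inner_eq_zero ht (inner_ρ_simpleRoot_of_notMem hC ht htC hs g)] at htg
    exact absurd hg htg

theorem hasSeparator_of_positiveSystem (hneg : ∀ y ∈ P, -y ∉ P) : D.HasSeparator s := by
  classical
  have hsS := hC.subset hs
  refine ⟨fun g => decide (D.ρ g (D.simpleRoot s) ∈ P), fun g => ?_, fun t ht g hne => ?_⟩
  · have := ρ_simpleRoot_mem_or_neg_mem hC hs hmem hstep g
    rw [← decide_not, decide_eq_decide, ρ_mul, ρ_simpleRoot_self hsS, map_neg]
    exact ⟨fun h h' => hneg _ h' h, this.resolve_left⟩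
  · by_cases hg : D.ρ g (D.simpleRoot s) ∈ P
    · exact mul_eq_mul_of_ρ_simpleRoot_mem hC hs hstep ht hg (by simpa [hg] using hne)
    · have h := mul_eq_mul_of_ρ_simpleRoot_mem hC hs hstep ht (g := t * g)
        (by simpa [hg] using hne) (by rwa [simple_mul_simple_mul ht])
      rw [simple_mul_simple_mul ht] at h
      conv_rhs => rw [h]
      rw [mul_assoc, D.hS_inv s hsS, mul_one]

end PositiveSystem

section Golden

variable {σ : GoldenInt →+* ℝ} {n : ℕ} {G : GramMatrix n} {a : Fin n → D.W} {x : Fin n → V}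

theorem IsGoldenFrame.hasSeparator (f : D.IsGoldenFrame C σ G a x) (hC : D.IsComponent C)
    (hrange : ∀ t ∈ C, t ∈ Set.range a) (hG : ∃ P, G.IsPositiveSystem P) (hs : s ∈ C) :
    D.HasSeparator s := by
  obtain ⟨P, hsimple, hP⟩ := hG
  have hx (i : Fin n) : x i ∈ frameVector σ x '' {v | v ∈ P} :=
    ⟨_, hsimple i, frameVector_single_one i⟩
  refine hasSeparator_of_positiveSystem hC hs (P := frameVector σ x '' {v | v ∈ P}) ?_ ?_ ?_
  · intro t ht
    obtain ⟨i, rfl⟩ := hrange t ht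
    rcases f.eq_or_eq_neg i with h | h
    · exact .inl (h ▸ hx i)
    · exact .inr (h ▸ hx i)
  · rintro t ht _ ⟨v, hv, rfl⟩
    obtain ⟨i, rfl⟩ := hrange t ht
    rcases (hP v hv).2 i with rfl | h
    · exact .inr (by rw [frameVector_single_one]; exact f.eq_or_eq_neg i)
    · exact .inl ⟨_, h, f.frameVector_reflect hC i v⟩
  · rintro _ ⟨v, hv, rfl⟩ ⟨w, hw, h⟩
    rw [← frameVector_neg] at h
    exact (hP v hv).1 (f.frameVector_injective hC h ▸ hw)

theorem exists_isGoldenFrame_H2 (hC : D.IsComponent C) (hcard : 2 < C.ncard) {t u : D.W}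
    (ht : t ∈ C) (hu : u ∈ C) (htu : IsGolden ⟪D.simpleRoot t, D.simpleRoot u⟫) :
    ∃ σ, D.IsGoldenComponent C σ ∧ ∃ x, D.IsGoldenFrame C σ H2 ![t, u] x := by
  obtain ⟨σ, hσ⟩ := exists_ringHom_of_isGolden htu
  have hself {v : D.W} (hv : v ∈ C) := inner_simpleRoot_self (hC.subset hv)
  have hne : t ≠ u := by
    rintro rfl
    rw [hself ht] at htu
    norm_num [IsGolden] at htu
  obtain ⟨y, hy, hty⟩ : ∃ y, (y = D.simpleRoot u ∨ y = -D.simpleRoot u) ∧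
      ⟪D.simpleRoot t, y⟫ = -σ φ := by
    rcases hσ with h | h
    · exact ⟨_, .inr rfl, by rw [inner_neg_right, h]⟩
    · exact ⟨_, .inl rfl, by rw [h, neg_neg]⟩
  have hyy : ⟪y, y⟫ = 2 := by
    rcases hy with rfl | rfl
    exacts [hself hu, by rw [inner_neg_neg, hself hu]]
  refine ⟨σ, ⟨hC, fun _ _ hx hy => exists_inner_eq_of_isGolden hC hcard σ ht hu htu hx hy⟩,
    ![D.simpleRoot t, y], ?_, ?_, ?_, ?_⟩
  · exact Fin.forall_fin_two.2 ⟨ht, hu⟩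
  · exact List.nodup_ofFn.1 (by simpa using hne)
  · exact Fin.forall_fin_two.2 ⟨.inl rfl, hy⟩
  · have htwo : σ 2 = 2 := map_ofNat σ 2
    rw [Fin.forall_fin_two, Fin.forall_fin_two, Fin.forall_fin_two]
    refine ⟨⟨?_, ?_⟩, ?_, ?_⟩
    · exact (hself ht).trans htwo.symm
    · exact hty.trans (map_neg σ φ).symm
    · exact (real_inner_comm _ _).trans (hty.trans (map_neg σ φ).symm)
    · exact hyy.trans htwo.symm

theorem hasSeparator_of_isGolden (hC : D.IsComponent C) (hcard : 2 < C.ncard) {t u : D.W}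
    (ht : t ∈ C) (hu : u ∈ C) (htu : IsGolden ⟪D.simpleRoot t, D.simpleRoot u⟫) (hs : s ∈ C) :
    D.HasSeparator s := by
  obtain ⟨σ, hgolden, x, f⟩ := exists_isGoldenFrame_H2 hC hcard ht hu htu
  obtain ⟨q, hq, hqa⟩ : ∃ q ∈ C, q ∉ Set.range ![t, u] := by
    refine Set.exists_mem_notMem_of_ncard_lt_ncard (lt_of_le_of_lt ?_ hcard)
    simpa using Set.ncard_insert_le u {t}
  obtain ⟨a, x, f⟩ := hgolden.exists_isGoldenFrame_H3 f hq hqa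
  by_cases hrange : ∀ v ∈ C, v ∈ Set.range a
  · exact f.hasSeparator hC hrange exists_isPositiveSystem_H3 hs
  · push Not at hrange
    obtain ⟨v, hv, hva⟩ := hrange
    obtain ⟨a, x, f⟩ := hgolden.exists_isGoldenFrame_H4 f hv hva
    exact f.hasSeparator hC (fun _ => hgolden.mem_range_of_frame_H4 f) exists_isPositiveSystem_H4
      hs

end Golden

theorem hasSeparator_of_mem_S (hs : s ∈ D.S) : D.HasSeparator s := by
  obtain ⟨C, hC, hsC⟩ := exists_isComponent hs
  by_cases hcard : 2 < C.ncard
  · by_cases hcr : D.IsCrystallographic C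
    · exact hasSeparator_of_isCrystallographic hC hcard hcr hsC
    · obtain ⟨t, ht, u, hu, htu⟩ : ∃ t ∈ C, ∃ u ∈ C,
          IsGolden ⟪D.simpleRoot t, D.simpleRoot u⟫ := by
        simpa [IsCrystallographic] using hcr
      exact hasSeparator_of_isGolden hC hcard ht hu htu hsC
  · refine hasSeparator_of_rank_two hC hsC fun t ht => ?_
    by_contra! hno
    obtain ⟨u, hu, hut, -⟩ := hno t
    obtain ⟨v, hv, hvt, hvu⟩ := hno u
    exact hcard ((Set.two_lt_ncard (Set.toFinite C)).2
      ⟨t, ht, u, hu, v, hv, hut.symm, hvt.symm, hvu.symm⟩)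

end CoxeterRootSystem

/-! ### Bruhat order -/

namespace CoxeterRootSystem

variable {V : Type} [NormedAddCommGroup V] [InnerProductSpace ℝ V] {D : CoxeterRootSystem V}

theorem strong_exchange {r : D.W} (hr : D.IsRefl r) {l : List D.W} (hl : D.IsWord l)
    (hlen : D.len (r * l.prod) ≤ D.len l.prod) :
    ∃ i < l.length, r * l.prod = (l.eraseIdx i).prod :=
  exchange_of_hasSeparator (fun _ => hasSeparator_of_mem_S) hr hl hlen

theorem isRefl_simple {s : D.W} (hs : s ∈ D.S) : D.IsRefl s := ⟨1, s, hs, by simp⟩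

theorem IsRefl.conj_simple {r s : D.W} (hr : D.IsRefl r) (hs : s ∈ D.S) :
    D.IsRefl (s * r * s) := by
  obtain ⟨u, t, ht, rfl⟩ := hr
  exact ⟨s * u, t, ht, by rw [mul_inv_rev, inv_simple hs]; group⟩

theorem cov_simple_mul {s : D.W} (hs : s ∈ D.S) {w : D.W} (h : D.len (s * w) = D.len w + 1) :
    D.Cov w (s * w) := ⟨⟨s, isRefl_simple hs, rfl⟩, h⟩

theorem Cov.simple_mul_of_len {s : D.W} (hs : s ∈ D.S) {z w : D.W} (h : D.Cov z w)
    (hlen : D.len (s * w) = D.len (s * z) + 1) : D.Cov (s * z) (s * w) := by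
  obtain ⟨⟨r, hr, rfl⟩, -⟩ := h
  refine ⟨⟨s * r * s, hr.conj_simple hs, ?_⟩, hlen⟩
  simp only [mul_assoc, simple_mul_simple_mul hs]

theorem len_simple_mul_of_cov {s : D.W} (hs : s ∈ D.S) {z w : D.W} (h : D.Cov z w)
    (hz : D.len (s * z) = D.len z + 1) (hne : w ≠ s * z) :
    D.len (s * w) = D.len w + 1 := by
  refine (len_simple_mul hs w).resolve_right fun hdown => ?_
  obtain ⟨⟨r, hr, rfl⟩, hlen⟩ := h
  obtain ⟨l, hl, hllen, hlprod⟩ := D.exists_reduced_word (s * (r * z))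
  have hprod : (s :: l).prod = r * z := by
    rw [List.prod_cons, hlprod, simple_mul_simple_mul hs]
  have hrr : r * (r * z) = z := by rw [← mul_assoc, hr.mul_self, one_mul]
  obtain ⟨i, hi, hi_prod⟩ := strong_exchange hr (isWord_cons.2 ⟨hs, hl⟩)
    (by rw [hprod, hrr]; omega)
  rw [hprod, hrr] at hi_prod
  rcases i with - | i
  · exact hne (by rw [← hprod, hi_prod, List.prod_cons, List.eraseIdx_cons_zero])
  · have hsz : s * z = (l.eraseIdx i).prod := by
      rw [hi_prod, List.eraseIdx_cons_succ, List.prod_cons, simple_mul_simple_mul hs]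
    have := len_lt_of_prod_eraseIdx hl (by simpa using hi) hsz
    omega

theorem Cov.simple_mul {s : D.W} (hs : s ∈ D.S) {z w : D.W} (h : D.Cov z w)
    (hz : D.len (s * z) = D.len z + 1) (hne : w ≠ s * z) : D.Cov (s * z) (s * w) :=
  h.simple_mul_of_len hs (by rw [len_simple_mul_of_cov hs h hz hne, h.2, hz])

theorem BruhatLE.lift_up {s : D.W} (hs : s ∈ D.S) {z y : D.W} (h : D.BruhatLE z y)
    (hz : D.len (s * z) = D.len z + 1) :
    D.BruhatLE (s * z) y ∨ (D.len (s * y) = D.len y + 1 ∧ D.BruhatLE (s * z) (s * y)) := by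
  induction h with
  | refl => exact Or.inr ⟨hz, Relation.ReflTransGen.refl⟩
  | @tail b c _ hbc ih =>
    rcases ih with hle | ⟨hlen, hle⟩
    · exact Or.inl (hle.tail hbc)
    · by_cases hc : c = s * b
      · exact Or.inl (hc ▸ hle)
      · exact Or.inr ⟨len_simple_mul_of_cov hs hbc hlen hc, hle.tail (hbc.simple_mul hs hlen hc)⟩

theorem BruhatLE.lift_down {s : D.W} (hs : s ∈ D.S) {z y : D.W} (h : D.BruhatLE z y)
    (hy : D.len y = D.len (s * y) + 1) :
    D.BruhatLE z (s * y) ∨ (D.len z = D.len (s * z) + 1 ∧ D.BruhatLE (s * z) (s * y)) := by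
  induction h using Relation.ReflTransGen.head_induction_on with
  | refl => exact Or.inr ⟨hy, Relation.ReflTransGen.refl⟩
  | @head b c hbc _ ih =>
    rcases ih with hle | ⟨hlen, hle⟩
    · exact Or.inl (Relation.ReflTransGen.head hbc hle)
    · by_cases hc : c = s * b
      · rw [hc, simple_mul_simple_mul hs] at hle
        exact Or.inl hle
      · rcases len_simple_mul hs b with hb | hb
        · have := len_simple_mul_of_cov hs hbc hb hc
          omega
        · have := hbc.2
          exact Or.inr ⟨hb, Relation.ReflTransGen.head (hbc.simple_mul_of_len hs (by omega)) hle⟩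

theorem BruhatLE.of_simple_mul {s : D.W} (hs : s ∈ D.S) {z z' : D.W}
    (hz : D.len (s * z) = D.len z + 1) (hz' : D.len (s * z') = D.len z' + 1)
    (h : D.BruhatLE (s * z) (s * z')) : D.BruhatLE z z' := by
  have := h.lift_down hs (by rwa [simple_mul_simple_mul hs])
  simp only [simple_mul_simple_mul hs] at this
  exact this.elim (Relation.ReflTransGen.head (cov_simple_mul hs hz)) And.right

section Interval

variable {s a y : D.W}

theorem lift_of_not_le (hs : s ∈ D.S) (ha : D.len (s * a) = D.len a + 1)
    (hay : ¬ D.BruhatLE (s * a) y) {z : D.W} (haz : D.BruhatLE a z) (hzy : D.BruhatLE z y) :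
    D.len (s * z) = D.len z + 1 ∧ D.BruhatLE (s * a) (s * z) :=
  (haz.lift_up hs ha).resolve_left fun h => hay (h.trans hzy)

theorem simple_mul_le_simple_mul_of_not_le (hs : s ∈ D.S) (ha : D.len (s * a) = D.len a + 1)
    (hay : ¬ D.BruhatLE (s * a) y) {z z' : D.W} (haz : D.BruhatLE a z) (hzz' : D.BruhatLE z z')
    (hz'y : D.BruhatLE z' y) : D.BruhatLE (s * z) (s * z') := by
  obtain ⟨hlen, hle⟩ := lift_of_not_le hs ha hay haz (hzz'.trans hz'y)
  exact ((hzz'.lift_up hs hlen).resolve_left fun h => hay (hle.trans (h.trans hz'y))).2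

theorem len_simple_mul_of_simple_mul_mem_interval (hs : s ∈ D.S)
    (hy : D.len (s * y) = D.len y + 1) (hay : ¬ D.BruhatLE (s * a) y) {z : D.W}
    (haz : D.BruhatLE (s * a) (s * z)) (hzy : D.BruhatLE (s * z) (s * y)) :
    D.len (s * z) = D.len z + 1 := by
  have hdown := hzy.lift_down hs (by rwa [simple_mul_simple_mul hs])
  simp only [simple_mul_simple_mul hs] at hdown
  exact (hdown.resolve_left fun h => hay (haz.trans h)).1

theorem mem_interval_iff_simple_mul (hs : s ∈ D.S) (ha : D.len (s * a) = D.len a + 1)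
    (hay : D.BruhatLE a y) (hnay : ¬ D.BruhatLE (s * a) y) (z : D.W) :
    (D.BruhatLE a z ∧ D.BruhatLE z y) ↔
      (D.BruhatLE (s * a) (s * z) ∧ D.BruhatLE (s * z) (s * y)) := by
  have hy := (lift_of_not_le hs ha hnay hay .refl).1
  refine ⟨fun ⟨haz, hzy⟩ => ⟨(lift_of_not_le hs ha hnay haz hzy).2,
    simple_mul_le_simple_mul_of_not_le hs ha hnay haz hzy .refl⟩, fun ⟨haz, hzy⟩ => ?_⟩
  have hz := len_simple_mul_of_simple_mul_mem_interval hs hy hnay haz hzy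
  exact ⟨haz.of_simple_mul hs ha hz, hzy.of_simple_mul hs hz hy⟩

end Interval

end CoxeterRootSystem

open CoxeterRootSystem in
theorem bruhat_interval_iso_of_not_le_general {V : Type} [NormedAddCommGroup V]
    [InnerProductSpace ℝ V] (D : CoxeterRootSystem V) (a y s : D.W) (hs : s ∈ D.S)
    (ha : D.Cov a (s * a)) (hay : D.BruhatLE a y) (hnay : ¬ D.BruhatLE (s * a) y) :
    D.Cov y (s * y) ∧ D.BruhatLE (s * a) (s * y) ∧
      (∀ z : D.W, (D.BruhatLE a z ∧ D.BruhatLE z y) ↔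
        (D.BruhatLE (s * a) (s * z) ∧ D.BruhatLE (s * z) (s * y))) ∧
      (∀ z z' : D.W, D.BruhatLE a z → D.BruhatLE z y → D.BruhatLE a z' → D.BruhatLE z' y →
        (D.BruhatLE z z' ↔ D.BruhatLE (s * z) (s * z'))) := by
  have lift {z : D.W} := lift_of_not_le hs ha.2 hnay (z := z)
  obtain ⟨hylen, hle⟩ := lift hay .refl
  refine ⟨cov_simple_mul hs hylen, hle, mem_interval_iff_simple_mul hs ha.2 hay hnay, ?_⟩
  intro z z' hz hzy hz' hz'y
  exact ⟨fun h => simple_mul_le_simple_mul_of_not_le hs ha.2 hnay hz h hz'y,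
    fun h => h.of_simple_mul hs (lift hz hzy).1 (lift hz' hz'y).1⟩

variable {V : Type} [NormedAddCommGroup V] [InnerProductSpace ℝ V]
/-- Let `s ∈ S` and a reflection `r` with `s ≠ r`, and suppose
`x ≺ sx, rx ≤ y` in Bruhat order while `srx ≰ y`. Then `y ≺ sy`, `srx ≤ sy`, and the Bruhat
intervals `[rx, y]` and `[srx, sy]` are isomorphic as posets via `w ↦ sw`. -/
theorem bruhat_interval_iso_of_not_le
    (D : CoxeterRootSystem V) (x y s r : D.W) (hs : s ∈ D.S) (hr : D.IsRefl r) (hne : s ≠ r)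
    (h1 : D.Cov x (s * x)) (h2 : D.Cov x (r * x))
    (h3 : D.BruhatLE (s * x) y) (h4 : D.BruhatLE (r * x) y)
    (h5 : ¬ D.BruhatLE (s * r * x) y) :
    D.Cov y (s * y) ∧ D.BruhatLE (s * r * x) (s * y) ∧
      (∀ z : D.W, (D.BruhatLE (r * x) z ∧ D.BruhatLE z y) ↔
        (D.BruhatLE (s * r * x) (s * z) ∧ D.BruhatLE (s * z) (s * y))) ∧
      (∀ z z' : D.W, D.BruhatLE (r * x) z → D.BruhatLE z y →
        D.BruhatLE (r * x) z' → D.BruhatLE z' y →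
        (D.BruhatLE z z' ↔ D.BruhatLE (s * z) (s * z'))) := by
  have hlen := CoxeterRootSystem.len_simple_mul_of_cov hs h2 h1.2
    fun h => hne (mul_right_cancel h).symm
  rw [mul_assoc] at h5 ⊢
  exact bruhat_interval_iso_of_not_le_general D (r * x) y s hs
    (CoxeterRootSystem.cov_simple_mul hs hlen) h4 h5
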